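/- arXiv:1504.01148 — 2 statements merged into one kernel-verified Lean document; each statement's English description precedes it below -/
import Mathlib

section
/- Let (R, m) be a commutative Noetherian local ring of Krull dimension n and let I be an ideal of R with cd(I) = ht(I) = h, where cd(I) = cd(I,R) and ht(I) is the height of I. Then there is an isomorphism of R-modules H^{n−h}_m(H^h_I(R)) ≅ H^n_m(R). -/
universe u

open CategoryTheory

/-- The cohomological dimension of `M` with respect to `I`:
`cd(I,M) = sup { i ∈ ℕ | H^i_I(M) ≠ 0 }`, as an element of `ℕ∞`. -/
noncomputable def cohomologicalDimension {R : Type u} [CommRing R] (I : Ideal R)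
    (M : ModuleCat.{u} R) : ℕ∞ :=
  sSup {c : ℕ∞ | ∃ i : ℕ, c = i ∧ Nontrivial ((localCohomology I i).obj M)}

/-- The height of an ideal: the infimum of the heights of the prime ideals containing it. -/
noncomputable def idealHeight {R : Type u} [CommRing R] (I : Ideal R) : ℕ∞ :=
  ⨅ (p : PrimeSpectrum R) (_ : I ≤ p.asIdeal), Order.height p

section

open Limits Opposite

namespace CategoryTheory.Ext

variable {R : Type u} [CommRing R]

/-- The chain complex in `(ModuleCat R)ᵒᵖ` given by `Hom(P, Y)`. -/
noncomputable abbrev homComplex (P : ChainComplex (ModuleCat.{u} R) ℕ) (Y : ModuleCat.{u} R) :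
    ChainComplex (ModuleCat.{u} R)ᵒᵖ ℕ :=
  (((linearYoneda R (ModuleCat.{u} R)).obj Y).rightOp.mapHomologicalComplex _).obj P

/-- The map `Hom(P, Z) ⟶ Hom(P, Y)` in `(ModuleCat R)ᵒᵖ` induced by `f : Y ⟶ Z`. -/
noncomputable abbrev homComplexMap (P : ChainComplex (ModuleCat.{u} R) ℕ) {Y Z : ModuleCat.{u} R}
    (f : Y ⟶ Z) : homComplex P Z ⟶ homComplex P Y :=
  (NatTrans.mapHomologicalComplex
    (NatTrans.rightOp ((linearYoneda R (ModuleCat.{u} R)).map f)) _).app P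

/-- The map `Hom(P, Y) ⟶ Hom(Q, Y)` in `(ModuleCat R)ᵒᵖ` induced by `φ : P ⟶ Q`. -/
noncomputable abbrev homComplexPrecomp {P Q : ChainComplex (ModuleCat.{u} R) ℕ} (φ : P ⟶ Q)
    (Y : ModuleCat.{u} R) : homComplex P Y ⟶ homComplex Q Y :=
  (((linearYoneda R (ModuleCat.{u} R)).obj Y).rightOp.mapHomologicalComplex _).map φ

lemma comp_f_comp_g (S : ShortComplex (ModuleCat.{u} R)) {A : ModuleCat.{u} R} (x : A ⟶ S.X₁) :
    (x ≫ S.f) ≫ S.g = 0 := by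
  simp

/-- The short complex `Hom(P, S.X₃) ⟶ Hom(P, S.X₂) ⟶ Hom(P, S.X₁)` in `(ModuleCat R)ᵒᵖ`. -/
@[simps]
noncomputable def homShortComplex (P : ChainComplex (ModuleCat.{u} R) ℕ)
    (S : ShortComplex (ModuleCat.{u} R)) :
    ShortComplex (ChainComplex (ModuleCat.{u} R)ᵒᵖ ℕ) where
  X₁ := homComplex P S.X₃
  X₂ := homComplex P S.X₂
  X₃ := homComplex P S.X₁
  f := homComplexMap P S.g
  g := homComplexMap P S.f
  zero := by
    ext n
    apply Quiver.Hom.unop_inj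
    ext x
    exact comp_f_comp_g S (A := P.X n) x

lemma homShortComplex_shortExact (P : ChainComplex (ModuleCat.{u} R) ℕ)
    [∀ n, Projective (P.X n)] {S : ShortComplex (ModuleCat.{u} R)} (hS : S.ShortExact) :
    (homShortComplex P S).ShortExact := by
  have := hS.mono_f
  have := hS.epi_g
  apply HomologicalComplex.shortExact_of_degreewise_shortExact
  intro n
  apply (ShortComplex.shortExact_iff_unop _).2
  apply ModuleCat.shortComplex_shortExact
  · intro x
    constructor
    · intro hx
      exact ⟨hS.exact.lift x hx, hS.exact.lift_f x hx⟩
    · rintro ⟨y, rfl⟩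
      exact comp_f_comp_g S (A := P.X n) y
  · intro x y hxy
    exact (cancel_mono S.f).1 hxy
  · intro y
    exact ⟨Projective.factorThru (P := P.X n) y S.g,
      Projective.factorThru_comp (P := P.X n) y S.g⟩

/-- The functoriality of `homShortComplex` in the complex. -/
@[simps]
noncomputable def homShortComplexPrecomp {P Q : ChainComplex (ModuleCat.{u} R) ℕ} (φ : P ⟶ Q)
    (S : ShortComplex (ModuleCat.{u} R)) : homShortComplex P S ⟶ homShortComplex Q S where
  τ₁ := homComplexPrecomp φ _
  τ₂ := homComplexPrecomp φ _
  τ₃ := homComplexPrecomp φ _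

variable {S : ShortComplex (ModuleCat.{u} R)} (hS : S.ShortExact)

/-- The connecting homomorphism of `homShortComplex P S`. -/
noncomputable def homologyδ (P : ChainComplex (ModuleCat.{u} R) ℕ) [∀ n, Projective (P.X n)]
    (i : ℕ) :
    (HomologicalComplex.homologyFunctor _ _ (i + 1)).obj (homComplex P S.X₁) ⟶
      (HomologicalComplex.homologyFunctor _ _ i).obj (homComplex P S.X₃) :=
  (homShortComplex_shortExact P hS).δ (i + 1) i (ComplexShape.down_mk _ _ rfl)

lemma homologyδ_naturality {P Q : ChainComplex (ModuleCat.{u} R) ℕ} [∀ n, Projective (P.X n)]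
    [∀ n, Projective (Q.X n)] (φ : P ⟶ Q) (i : ℕ) :
    homologyδ hS P i ≫
      (HomologicalComplex.homologyFunctor _ _ i).map (homComplexPrecomp φ S.X₃) =
    (HomologicalComplex.homologyFunctor _ _ (i + 1)).map (homComplexPrecomp φ S.X₁) ≫
      homologyδ hS Q i :=
  HomologicalComplex.HomologySequence.δ_naturality (homShortComplexPrecomp φ S)
    (homShortComplex_shortExact P hS) (homShortComplex_shortExact Q hS)
    (i + 1) i (ComplexShape.down_mk _ _ rfl)

/-- The connecting homomorphism of `Ext(X, -)`, in `(ModuleCat R)ᵒᵖ`. -/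
noncomputable def δOp (i : ℕ) (X : ModuleCat.{u} R) :
    (((linearYoneda R (ModuleCat.{u} R)).obj S.X₁).rightOp.leftDerived (i + 1)).obj X ⟶
    (((linearYoneda R (ModuleCat.{u} R)).obj S.X₃).rightOp.leftDerived i).obj X :=
  ((projectiveResolution X).isoLeftDerivedObj _ _).hom ≫
    homologyδ hS (projectiveResolution X).complex i ≫
    ((projectiveResolution X).isoLeftDerivedObj _ _).inv

/-- The connecting homomorphism of `Ext`, natural in the first variable. -/
noncomputable def δ (i : ℕ) :
    (Ext R (ModuleCat.{u} R) i).flip.obj S.X₃ ⟶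
      (Ext R (ModuleCat.{u} R) (i + 1)).flip.obj S.X₁ where
  app X := (δOp hS i X.unop).unop
  naturality X Y f := by
    apply Quiver.Hom.op_inj
    let P := projectiveResolution X.unop
    let Q := projectiveResolution Y.unop
    let φ := ProjectiveResolution.lift f.unop Q P
    have hφ : φ.f 0 ≫ P.π.f 0 = Q.π.f 0 ≫ f.unop :=
      ProjectiveResolution.lift_commutes_zero f.unop Q P
    change δOp hS i Y.unop ≫
      (((linearYoneda R (ModuleCat.{u} R)).obj S.X₃).rightOp.leftDerived i).map f.unop =
      (((linearYoneda R (ModuleCat.{u} R)).obj S.X₁).rightOp.leftDerived (i + 1)).map f.unop ≫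
        δOp hS i X.unop
    dsimp only [δOp]
    rw [Category.assoc, Category.assoc,
      ProjectiveResolution.isoLeftDerivedObj_inv_naturality f.unop Q P φ hφ,
      ProjectiveResolution.isoLeftDerivedObj_hom_naturality_assoc f.unop Q P φ hφ]
    simp only [Functor.comp_map]
    rw [← Category.assoc (homologyδ _ _ _), homologyδ_naturality, Category.assoc]

lemma flip_map_app (i : ℕ) {Y Z : ModuleCat.{u} R} (f : Y ⟶ Z) (X : (ModuleCat.{u} R)ᵒᵖ) :
    ((Ext R (ModuleCat.{u} R) i).flip.map f).app X =
      (((projectiveResolution X.unop).isoLeftDerivedObj _ _).hom ≫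
        HomologicalComplex.homologyMap (homComplexMap (projectiveResolution X.unop).complex f) i ≫
        ((projectiveResolution X.unop).isoLeftDerivedObj _ _).inv).unop := by
  change (((NatTrans.rightOp ((linearYoneda R (ModuleCat.{u} R)).map f)).leftDerived i).app
    X.unop).unop = _
  rw [ProjectiveResolution.leftDerived_app_eq _ (projectiveResolution X.unop)]
  rfl

lemma function_exact_conj {A B C A' B' C' : (ModuleCat.{u} R)ᵒᵖ} {f : A ⟶ B} {g : B ⟶ C}
    {w : f ≫ g = 0} (h : (ShortComplex.mk f g w).Exact) (a : A' ≅ A) (b : B' ≅ B) (c : C' ≅ C) :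
    Function.Exact (b.hom ≫ g ≫ c.inv).unop (a.hom ≫ f ≫ b.inv).unop := by
  have h' : (ShortComplex.mk (a.hom ≫ f ≫ b.inv) (b.hom ≫ g ≫ c.inv)
      (by simp [← Category.assoc f, w])).Exact := by
    refine (ShortComplex.exact_iff_of_iso (ShortComplex.isoMk a b c ?_ ?_)).2 h <;> simp
  exact (ShortComplex.ShortExact.moduleCat_exact_iff_function_exact _).1 h'.unop

lemma exact₁ (i : ℕ) (X : (ModuleCat.{u} R)ᵒᵖ) : Function.Exact ((δ hS i).app X)
    (((Ext R (ModuleCat.{u} R) (i + 1)).flip.map S.f).app X) := by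
  rw [flip_map_app]
  exact function_exact_conj ((homShortComplex_shortExact
    (projectiveResolution X.unop).complex hS).homology_exact₃ (i + 1) i
    (ComplexShape.down_mk _ _ rfl)) _ _ _

lemma exact₂ {S : ShortComplex (ModuleCat.{u} R)} (hS : S.ShortExact) (i : ℕ)
    (X : (ModuleCat.{u} R)ᵒᵖ) :
    Function.Exact (((Ext R (ModuleCat.{u} R) i).flip.map S.f).app X)
      (((Ext R (ModuleCat.{u} R) i).flip.map S.g).app X) := by
  rw [flip_map_app, flip_map_app]
  exact function_exact_conj ((homShortComplex_shortExact
    (projectiveResolution X.unop).complex hS).homology_exact₂ i) _ _ _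

lemma exact₃ (i : ℕ) (X : (ModuleCat.{u} R)ᵒᵖ) :
    Function.Exact (((Ext R (ModuleCat.{u} R) i).flip.map S.g).app X) ((δ hS i).app X) := by
  rw [flip_map_app]
  exact function_exact_conj ((homShortComplex_shortExact
    (projectiveResolution X.unop).complex hS).homology_exact₁ (i + 1) i
    (ComplexShape.down_mk _ _ rfl)) _ _ _

lemma isZero_of_injective (i : ℕ) (X : (ModuleCat.{u} R)ᵒᵖ) (Y : ModuleCat.{u} R) [Injective Y] :
    IsZero (((Ext R (ModuleCat.{u} R) (i + 1)).obj X).obj Y) := by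
  let P := projectiveResolution X.unop
  refine IsZero.of_iso ?_ (P.isoExt (i + 1) Y)
  rw [← HomologicalComplex.exactAt_iff_isZero_homology,
    HomologicalComplex.exactAt_iff' _ i (i + 1) (i + 2) (by simp) (by simp),
    ShortComplex.moduleCat_exact_iff]
  intro x hx
  have hP : (P.complex.sc' (i + 2) (i + 1) i).Exact := by
    rw [← HomologicalComplex.exactAt_iff' _ (i + 2) (i + 1) i (by simp) (by simp)]
    exact P.complex_exactAt_succ i
  exact ⟨hP.descToInjective x hx, hP.comp_descToInjective x hx⟩

instance preservesFiniteLimits_linearYoneda_obj (Y : ModuleCat.{u} R) :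
    PreservesFiniteLimits ((linearYoneda R (ModuleCat.{u} R)).obj Y) := by
  have : PreservesFiniteLimits ((linearYoneda R (ModuleCat.{u} R)).obj Y ⋙ forget _) :=
    inferInstanceAs (PreservesFiniteLimits (yoneda.obj Y))
  exact preservesFiniteLimits_of_reflects_of_preserves _ (forget (ModuleCat.{u} R))

lemma fromLeftDerivedZero'_naturality_functor {C D : Type*} [Category* C] [Category* D] [Abelian C]
    [Abelian D] {F G : C ⥤ D} [F.Additive] [G.Additive] (α : F ⟶ G) {X : C}
    (P : ProjectiveResolution X) :
    HomologicalComplex.opcyclesMap ((NatTrans.mapHomologicalComplex α _).app P.complex) 0 ≫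
      P.fromLeftDerivedZero' G = P.fromLeftDerivedZero' F ≫ α.app X := by
  rw [← cancel_epi (HomologicalComplex.pOpcycles _ _)]
  rw [HomologicalComplex.p_opcyclesMap_assoc,
    ProjectiveResolution.pOpcycles_comp_fromLeftDerivedZero'_assoc,
    ProjectiveResolution.pOpcycles_comp_fromLeftDerivedZero']
  exact (α.naturality (P.π.f 0)).symm

lemma fromLeftDerivedZero_naturality {C D : Type*} [Category* C] [Category* D] [Abelian C]
    [EnoughProjectives C] [Abelian D] {F G : C ⥤ D} [F.Additive] [G.Additive] (α : F ⟶ G) (X : C) :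
    (α.leftDerived 0).app X ≫ G.fromLeftDerivedZero.app X =
      F.fromLeftDerivedZero.app X ≫ α.app X := by
  let P := projectiveResolution X
  rw [ProjectiveResolution.fromLeftDerivedZero_eq P, ProjectiveResolution.fromLeftDerivedZero_eq P,
    ProjectiveResolution.leftDerived_app_eq α P]
  simp only [Category.assoc, Iso.inv_hom_id_assoc]
  congr 1
  refine (HomologicalComplex.homologyι_naturality_assoc _ _ _).trans ?_
  refine Eq.trans ?_ (Category.assoc _ _ _).symm
  exact congrArg _ (fromLeftDerivedZero'_naturality_functor α P)

instance isIso_fromLeftDerivedZero_linearYoneda (X Y : ModuleCat.{u} R) :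
    IsIso ((((linearYoneda R (ModuleCat.{u} R)).obj Y).rightOp.fromLeftDerivedZero).app X) := by
  have : PreservesFiniteColimits ((linearYoneda R (ModuleCat.{u} R)).obj Y).rightOp :=
    preservesFiniteColimits_rightOp _
  infer_instance

/-- `Ext⁰` is `Hom`. -/
noncomputable def zeroIso : linearCoyoneda R (ModuleCat.{u} R) ≅ Ext R (ModuleCat.{u} R) 0 :=
  NatIso.ofComponents (fun X ↦ NatIso.ofComponents
    (fun Y ↦ (asIso
      ((((linearYoneda R (ModuleCat.{u} R)).obj Y).rightOp.fromLeftDerivedZero).app X.unop)).unop)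
    (fun {Y Z} f ↦ by
      apply Quiver.Hom.op_inj
      exact (fromLeftDerivedZero_naturality
        (NatTrans.rightOp ((linearYoneda R (ModuleCat.{u} R)).map f)) X.unop).symm))
    (fun {X Y} f ↦ by
      ext Z : 2
      apply Quiver.Hom.op_inj
      exact ((((linearYoneda R (ModuleCat.{u} R)).obj Z).rightOp.fromLeftDerivedZero).naturality
        f.unop).symm)

end CategoryTheory.Ext

namespace localCohomology

variable {R : Type u} [CommRing R] (J : Ideal R)

instance preservesColimitsOfShape_forget :
    PreservesColimitsOfShape ℕᵒᵖᵒᵖ (forget (ModuleCat.{u} R)) :=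
  have : PreservesFilteredColimitsOfSize.{0, 0} (forget (ModuleCat.{u} R)) :=
    preservesFilteredColimitsOfSize_shrink _
  PreservesFilteredColimitsOfSize.preserves_filtered_colimits _

/-- The functor `Ext^i(R/J^t, -)`. -/
noncomputable def stage (i : ℕ) (j : ℕᵒᵖᵒᵖ) : ModuleCat.{u} R ⥤ ModuleCat.{u} R :=
  (diagram (idealPowersDiagram J) i).obj j

variable {J} in
/-- The transition maps of the direct system `Ext^i(R/J^t, -)`. -/
noncomputable def stageMap (i : ℕ) {j k : ℕᵒᵖᵒᵖ} (f : j ⟶ k) : stage J i j ⟶ stage J i k :=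
  (diagram (idealPowersDiagram J) i).map f

/-- The canonical map from `Ext^i(R/J^t, -)` to local cohomology. -/
noncomputable def ι (i : ℕ) (j : ℕᵒᵖᵒᵖ) : stage J i j ⟶ localCohomology J i :=
  colimit.ι (diagram (idealPowersDiagram J) i) j

/-- The direct system `Ext^i(R/J^t, M)`. -/
noncomputable def system (i : ℕ) (M : ModuleCat.{u} R) : ℕᵒᵖᵒᵖ ⥤ ModuleCat.{u} R where
  obj j := (stage J i j).obj M
  map f := (stageMap i f).app M
  map_id j := congr_app ((diagram (idealPowersDiagram J) i).map_id j) M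
  map_comp f g := congr_app ((diagram (idealPowersDiagram J) i).map_comp f g) M

/-- Local cohomology is computed pointwise. -/
noncomputable def objIso (i : ℕ) (M : ModuleCat.{u} R) :
    (localCohomology J i).obj M ≅ colimit (system J i M) :=
  colimitObjIsoColimitCompEvaluation (diagram (idealPowersDiagram J) i) M

/-- The canonical map into the colimit of `system J i M`. -/
noncomputable def systemι (i : ℕ) (M : ModuleCat.{u} R) (j : ℕᵒᵖᵒᵖ) :
    (stage J i j).obj M ⟶ colimit (system J i M) :=
  colimit.ι (system J i M) j

lemma systemι_objIso_inv (i : ℕ) (M : ModuleCat.{u} R) (j : ℕᵒᵖᵒᵖ) :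
    systemι J i M j ≫ (objIso J i M).inv = (ι J i j).app M :=
  colimitObjIsoColimitCompEvaluation_ι_inv (diagram (idealPowersDiagram J) i) j M

lemma ι_objIso_hom (i : ℕ) (M : ModuleCat.{u} R) (j : ℕᵒᵖᵒᵖ) :
    (ι J i j).app M ≫ (objIso J i M).hom = systemι J i M j := by
  rw [← Iso.eq_comp_inv, systemι_objIso_inv]

variable {J}

lemma ι_stageMap {i : ℕ} {j k : ℕᵒᵖᵒᵖ} (f : j ⟶ k) (M : ModuleCat.{u} R)
    (x : (stage J i j).obj M) :
    (ι J i k).app M ((stageMap i f).app M x) = (ι J i j).app M x := by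
  have := congr_app (colimit.w (diagram (idealPowersDiagram J) i) f) M
  exact congr($this x)

lemma exists_rep {i : ℕ} {M : ModuleCat.{u} R} (x : (localCohomology J i).obj M) :
    ∃ (j : ℕᵒᵖᵒᵖ) (y : (stage J i j).obj M), (ι J i j).app M y = x := by
  obtain ⟨j, y, hy⟩ := Concrete.colimit_exists_rep _ ((objIso J i M).hom x)
  exact ⟨j, y, congr($(systemι_objIso_inv J i M j) y).symm.trans
    ((congrArg (objIso J i M).inv hy).trans ((objIso J i M).hom_inv_id_apply x))⟩

lemma exists_stageMap_eq_zero {i : ℕ} {M : ModuleCat.{u} R} {j : ℕᵒᵖᵒᵖ}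
    {y : (stage J i j).obj M} (hy : (ι J i j).app M y = 0) :
    ∃ (k : ℕᵒᵖᵒᵖ) (f : j ⟶ k), (stageMap i f).app M y = 0 := by
  refine Concrete.colimit_rep_eq_zero R (system J i M) j y ?_
  exact congr($(ι_objIso_hom J i M j) y).symm.trans
    ((congrArg (objIso J i M).hom hy).trans (map_zero _))

lemma map_ι {i : ℕ} {M N : ModuleCat.{u} R} (f : M ⟶ N) (j : ℕᵒᵖᵒᵖ)
    (y : (stage J i j).obj M) :
    (localCohomology J i).map f ((ι J i j).app M y) =
      (ι J i j).app N ((stage J i j).map f y) :=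
  congr($((ι J i j).naturality f) y).symm

lemma stageMap_map {i : ℕ} {M N : ModuleCat.{u} R} (f : M ⟶ N) {j k : ℕᵒᵖᵒᵖ} (g : j ⟶ k)
    (y : (stage J i j).obj M) :
    (stageMap i g).app N ((stage J i j).map f y) =
      (stage J i k).map f ((stageMap i g).app M y) :=
  congr($((stageMap i g).naturality f) y)

variable {S : ShortComplex (ModuleCat.{u} R)} (hS : S.ShortExact)

/-- The connecting map of `Ext^•(R/J^t, -)`. -/
noncomputable def stageδ (i : ℕ) (j : ℕᵒᵖᵒᵖ) :
    (stage J i j).obj S.X₃ ⟶ (stage J (i + 1) j).obj S.X₁ :=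
  (CategoryTheory.Ext.δ hS i).app ((ringModIdeals (idealPowersDiagram J)).op.obj j)

lemma stageMap_stageδ (i : ℕ) {j k : ℕᵒᵖᵒᵖ} (f : j ⟶ k) :
    (stageMap i f).app _ ≫ stageδ hS i k = stageδ hS i j ≫ (stageMap (J := J) (i + 1) f).app _ :=
  (CategoryTheory.Ext.δ hS i).naturality ((ringModIdeals (idealPowersDiagram J)).op.map f)

lemma stageδ_stageMap (i : ℕ) {j k : ℕᵒᵖᵒᵖ} (f : j ⟶ k) (y : (stage J i j).obj S.X₃) :
    stageδ hS i k ((stageMap i f).app _ y) = (stageMap (i + 1) f).app _ (stageδ hS i j y) :=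
  congr($(stageMap_stageδ hS i f) y)

variable (J) in
/-- The connecting maps of `Ext^•(R/J^t, -)` form a map of direct systems. -/
noncomputable def systemδ (i : ℕ) : system J i S.X₃ ⟶ system J (i + 1) S.X₁ where
  app j := stageδ hS i j
  naturality _ _ f := stageMap_stageδ hS i f

lemma systemι_colimMap_systemδ (i : ℕ) (j : ℕᵒᵖᵒᵖ) :
    systemι J i S.X₃ j ≫ colimMap (systemδ J hS i) = stageδ hS i j ≫ systemι J (i + 1) S.X₁ j :=
  ι_colimMap (systemδ J hS i) j

variable (J) in
/-- The connecting map of local cohomology. -/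
noncomputable def δ (i : ℕ) :
    (localCohomology J i).obj S.X₃ ⟶ (localCohomology J (i + 1)).obj S.X₁ :=
  (objIso J i S.X₃).hom ≫
    colimMap (systemδ J hS i) ≫
    (objIso J (i + 1) S.X₁).inv

lemma δ_ι (i : ℕ) (j : ℕᵒᵖᵒᵖ) (y : (stage J i j).obj S.X₃) :
    δ J hS i ((ι J i j).app _ y) = (ι J (i + 1) j).app _ (stageδ hS i j y) := by
  have : (ι J i j).app S.X₃ ≫ δ J hS i = stageδ hS i j ≫ (ι J (i + 1) j).app S.X₁ := by
    unfold δ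
    rw [← Category.assoc, ι_objIso_hom, ← Category.assoc, systemι_colimMap_systemδ,
      Category.assoc, systemι_objIso_inv]
  exact congr($this y)

lemma stage_exact₂ {S : ShortComplex (ModuleCat.{u} R)} (hS : S.ShortExact) (i : ℕ) (j : ℕᵒᵖᵒᵖ) :
    Function.Exact ((stage J i j).map S.f) ((stage J i j).map S.g) :=
  CategoryTheory.Ext.exact₂ hS i _

lemma stage_exact₃ (i : ℕ) (j : ℕᵒᵖᵒᵖ) :
    Function.Exact ((stage J i j).map S.g) (stageδ (J := J) hS i j) :=
  CategoryTheory.Ext.exact₃ hS i _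

lemma stage_exact₁ (i : ℕ) (j : ℕᵒᵖᵒᵖ) :
    Function.Exact (stageδ (J := J) hS i j) ((stage J (i + 1) j).map S.f) :=
  CategoryTheory.Ext.exact₁ hS i _

lemma map_exact {S : ShortComplex (ModuleCat.{u} R)} (hS : S.ShortExact) (i : ℕ) :
    Function.Exact ((localCohomology J i).map S.f) ((localCohomology J i).map S.g) := by
  intro x
  constructor
  · intro hx
    obtain ⟨j, y, rfl⟩ := exists_rep x
    rw [map_ι] at hx
    obtain ⟨k, f, hf⟩ := exists_stageMap_eq_zero hx
    rw [stageMap_map] at hf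
    obtain ⟨z, hz⟩ := (stage_exact₂ hS i _ _).1 hf
    exact ⟨(ι J i k).app _ z, by rw [map_ι, hz, ι_stageMap f]⟩
  · rintro ⟨y, rfl⟩
    obtain ⟨j, y, rfl⟩ := exists_rep y
    rw [map_ι, map_ι, (stage_exact₂ hS i j _).2 ⟨y, rfl⟩, map_zero]

lemma exact_map_δ (i : ℕ) :
    Function.Exact ((localCohomology J i).map S.g) (δ J hS i) := by
  intro x
  constructor
  · intro hx
    obtain ⟨j, y, rfl⟩ := exists_rep x
    rw [δ_ι] at hx
    obtain ⟨k, f, hf⟩ := exists_stageMap_eq_zero hx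
    rw [← stageδ_stageMap] at hf
    obtain ⟨z, hz⟩ := (stage_exact₃ hS i _ _).1 hf
    exact ⟨(ι J i k).app _ z, by rw [map_ι, hz, ι_stageMap f]⟩
  · rintro ⟨y, rfl⟩
    obtain ⟨j, y, rfl⟩ := exists_rep y
    rw [map_ι, δ_ι, (stage_exact₃ hS i j _).2 ⟨y, rfl⟩, map_zero]

lemma exact_δ_map (i : ℕ) :
    Function.Exact (δ J hS i) ((localCohomology J (i + 1)).map S.f) := by
  intro x
  constructor
  · intro hx
    obtain ⟨j, y, rfl⟩ := exists_rep x
    rw [map_ι] at hx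
    obtain ⟨k, f, hf⟩ := exists_stageMap_eq_zero hx
    rw [stageMap_map] at hf
    obtain ⟨z, hz⟩ := (stage_exact₁ hS i _ _).1 hf
    exact ⟨(ι J i k).app _ z, by rw [δ_ι, hz, ι_stageMap f]⟩
  · rintro ⟨y, rfl⟩
    obtain ⟨j, y, rfl⟩ := exists_rep y
    rw [δ_ι, map_ι, (stage_exact₁ hS i j _).2 ⟨y, rfl⟩, map_zero]

lemma subsingleton_of_injective (i : ℕ) (M : ModuleCat.{u} R) [Injective M] :
    Subsingleton ((localCohomology J (i + 1)).obj M) := by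
  refine subsingleton_of_forall_eq 0 fun x ↦ ?_
  obtain ⟨j, y, rfl⟩ := exists_rep x
  have : Subsingleton ((stage J (i + 1) j).obj M) := ModuleCat.subsingleton_of_isZero
    (CategoryTheory.Ext.isZero_of_injective i ((ringModIdeals (idealPowersDiagram J)).op.obj j) M)
  rw [Subsingleton.elim y 0, map_zero]

/-- Evaluation at `1` as a natural transformation `Hom(R/J^t, -) ⟶ 𝟭`. -/
noncomputable def evalOne (j : ℕᵒᵖᵒᵖ) :
    (linearCoyoneda R (ModuleCat.{u} R)).obj ((ringModIdeals (idealPowersDiagram J)).op.obj j) ⟶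
      𝟭 _ where
  app _ := ModuleCat.ofHom
    { toFun f := f.hom (Ideal.Quotient.mk _ 1)
      map_add' _ _ := rfl
      map_smul' _ _ := rfl }
  naturality _ _ _ := rfl

lemma map_evalOne {j k : ℕᵒᵖᵒᵖ} (f : j ⟶ k) :
    (linearCoyoneda R (ModuleCat.{u} R)).map ((ringModIdeals (idealPowersDiagram J)).op.map f) ≫
      evalOne k = evalOne j :=
  rfl

variable (J) in
/-- `Ext⁰(R/J^t, -) ⟶ 𝟭`, evaluation at `1`. -/
noncomputable def stageZeroι (j : ℕᵒᵖᵒᵖ) : stage J 0 j ⟶ 𝟭 (ModuleCat.{u} R) :=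
  (CategoryTheory.Ext.zeroIso.app _).inv ≫ evalOne j

lemma stageMap_stageZeroι {j k : ℕᵒᵖᵒᵖ} (f : j ⟶ k) :
    stageMap 0 f ≫ stageZeroι J k = stageZeroι J j := by
  refine Eq.trans (Category.assoc _ _ _).symm (Eq.trans (congrArg (· ≫ evalOne k)
    (CategoryTheory.Ext.zeroIso.inv.naturality
      ((ringModIdeals (idealPowersDiagram J)).op.map f))) ?_)
  refine (Category.assoc _ _ _).trans ?_
  rw [map_evalOne]
  rfl

variable (J) in
/-- The natural map `H⁰_J(M) ⟶ M`. -/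
noncomputable def zeroι : localCohomology J 0 ⟶ 𝟭 (ModuleCat.{u} R) :=
  colimit.desc (diagram (idealPowersDiagram J) 0)
    { pt := 𝟭 _
      ι :=
        { app j := stageZeroι J j
          naturality _ _ f := (stageMap_stageZeroι f).trans (Category.comp_id _).symm } }

lemma ι_zeroι (j : ℕᵒᵖᵒᵖ) : ι J 0 j ≫ zeroι J = stageZeroι J j :=
  colimit.ι_desc _ _

lemma zeroι_ι (j : ℕᵒᵖᵒᵖ) (M : ModuleCat.{u} R) (y : (stage J 0 j).obj M) :
    (zeroι J).app M ((ι J 0 j).app M y) = (stageZeroι J j).app M y :=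
  congr($(congr_app (ι_zeroι (J := J) j) M) y)

lemma evalOne_injective (j : ℕᵒᵖᵒᵖ) (M : ModuleCat.{u} R) :
    Function.Injective ((evalOne (J := J) j).app M) := by
  intro f g h
  apply ModuleCat.hom_ext
  exact Submodule.linearMap_qext _ (LinearMap.ext_ring h)

lemma stageZeroι_injective (j : ℕᵒᵖᵒᵖ) (M : ModuleCat.{u} R) :
    Function.Injective ((stageZeroι J j).app M) :=
  (evalOne_injective j M).comp
    (((CategoryTheory.Ext.zeroIso.app
      ((ringModIdeals (idealPowersDiagram J)).op.obj j)).symm.app M).toLinearEquiv.injective)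

lemma range_stageZeroι (j : ℕᵒᵖᵒᵖ) (M : ModuleCat.{u} R) (x : M) :
    x ∈ Set.range ((stageZeroι J j).app M) ↔ ∀ a ∈ J ^ j.unop.unop, a • x = 0 := by
  have h : Set.range ((stageZeroι J j).app M) = Set.range ((evalOne (J := J) j).app M) :=
    (((CategoryTheory.Ext.zeroIso.app
      ((ringModIdeals (idealPowersDiagram J)).op.obj j)).symm.app
        M).toLinearEquiv.surjective.range_comp ((evalOne (J := J) j).app M))
  rw [h]
  constructor
  · rintro ⟨f, rfl⟩ a ha
    refine (map_smul f.hom a (Ideal.Quotient.mk _ 1)).symm.trans ?_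
    refine (congrArg f.hom ?_).trans (map_zero f.hom)
    refine (Submodule.Quotient.mk_eq_zero _).2 ?_
    change a * 1 ∈ J ^ j.unop.unop
    rwa [mul_one]
  · intro hx
    refine ⟨ModuleCat.ofHom (Submodule.liftQ _ (LinearMap.toSpanSingleton R M x) fun a ha ↦ ?_), ?_⟩
    · exact hx a ha
    · exact one_smul R x

lemma zeroι_injective (M : ModuleCat.{u} R) : Function.Injective ((zeroι J).app M) := by
  refine (injective_iff_map_eq_zero _).2 fun x hx ↦ ?_
  obtain ⟨j, y, rfl⟩ := exists_rep x
  rw [zeroι_ι] at hx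
  rw [(injective_iff_map_eq_zero _).1 (stageZeroι_injective j M) y hx, map_zero]

lemma mem_range_zeroι {M : ModuleCat.{u} R} {x : M} :
    x ∈ Set.range ((zeroι J).app M) ↔ ∃ t : ℕ, ∀ a ∈ J ^ t, a • x = 0 := by
  constructor
  · rintro ⟨y, rfl⟩
    obtain ⟨j, y, rfl⟩ := exists_rep y
    exact ⟨j.unop.unop, (range_stageZeroι j M _).1 ⟨y, (zeroι_ι j M y).symm⟩⟩
  · rintro ⟨t, ht⟩
    obtain ⟨y, hy⟩ := (range_stageZeroι (op (op t)) M x).2 ht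
    exact ⟨(ι J 0 _).app M y, (zeroι_ι _ M y).trans hy⟩

end localCohomology

namespace Ideal

variable {R : Type u} [CommRing R] (J : Ideal R) (M : Type*) [AddCommGroup M] [Module R M]

/-- The submodule of elements of `M` annihilated by some power of the ideal `J`. -/
def powerTorsion : Submodule R M where
  carrier := {x | ∃ t : ℕ, ∀ a ∈ J ^ t, a • x = 0}
  zero_mem' := ⟨0, fun a _ ↦ smul_zero a⟩
  add_mem' := by
    rintro x y ⟨s, hs⟩ ⟨t, ht⟩
    refine ⟨s + t, fun a ha ↦ ?_⟩
    rw [smul_add, hs a (Ideal.pow_le_pow_right (Nat.le_add_right s t) ha),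
      ht a (Ideal.pow_le_pow_right (Nat.le_add_left t s) ha), add_zero]
  smul_mem' := by
    rintro c x ⟨t, ht⟩
    exact ⟨t, fun a ha ↦ by rw [smul_comm, ht a ha, smul_zero]⟩

variable {J M}

lemma mem_powerTorsion {x : M} : x ∈ J.powerTorsion M ↔ ∃ t : ℕ, ∀ a ∈ J ^ t, a • x = 0 :=
  Iff.rfl

lemma mem_powerTorsion_span_singleton {y : R} {x : M} :
    x ∈ (span {y}).powerTorsion M ↔ ∃ t : ℕ, y ^ t • x = 0 := by
  simp only [mem_powerTorsion, span_singleton_pow]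
  refine exists_congr fun t ↦ ⟨fun h ↦ h _ (mem_span_singleton_self _), fun h a ha ↦ ?_⟩
  obtain ⟨b, rfl⟩ := mem_span_singleton'.1 ha
  rw [mul_smul, h, smul_zero]

variable {N : Type*} [AddCommGroup N] [Module R N]

lemma map_mem_powerTorsion (f : M →ₗ[R] N) {x : M} (hx : x ∈ J.powerTorsion M) :
    f x ∈ J.powerTorsion N := by
  obtain ⟨t, ht⟩ := hx
  exact ⟨t, fun a ha ↦ by rw [← map_smul, ht a ha, map_zero]⟩

lemma map_mem_powerTorsion_iff {f : M →ₗ[R] N} (hf : Function.Injective f) {x : M} :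
    f x ∈ J.powerTorsion N ↔ x ∈ J.powerTorsion M := by
  refine ⟨fun ⟨t, ht⟩ ↦ ⟨t, fun a ha ↦ hf ?_⟩, map_mem_powerTorsion f⟩
  rw [map_smul, ht a ha, map_zero]

lemma powerTorsion_eq_top_of_surjective {f : M →ₗ[R] N} (hf : Function.Surjective f)
    (h : J.powerTorsion M = ⊤) : J.powerTorsion N = ⊤ := by
  refine eq_top_iff.2 fun x _ ↦ ?_
  obtain ⟨y, rfl⟩ := hf x
  exact map_mem_powerTorsion f (h ▸ Submodule.mem_top)

lemma powerTorsion_eq_top_of_injective {f : M →ₗ[R] N} (hf : Function.Injective f)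
    (h : J.powerTorsion N = ⊤) : J.powerTorsion M = ⊤ :=
  eq_top_iff.2 fun _ _ ↦ (map_mem_powerTorsion_iff hf).1 (h ▸ Submodule.mem_top)

lemma powerTorsion_eq_bot_of_injective {f : M →ₗ[R] N} (hf : Function.Injective f)
    (h : J.powerTorsion N = ⊥) : J.powerTorsion M = ⊥ := by
  refine eq_bot_iff.2 fun x hx ↦ ?_
  have := map_mem_powerTorsion f hx
  rw [h, Submodule.mem_bot] at this
  exact (injective_iff_map_eq_zero f).1 hf x this

lemma powerTorsion_powerTorsion : J.powerTorsion (J.powerTorsion M) = ⊤ :=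
  eq_top_iff.2 fun x _ ↦
    (map_mem_powerTorsion_iff (J.powerTorsion M).injective_subtype).1 x.2

variable (M) in
lemma powerTorsion_anti {I : Ideal R} (h : I ≤ J) : J.powerTorsion M ≤ I.powerTorsion M :=
  fun _ ⟨t, ht⟩ ↦ ⟨t, fun a ha ↦ ht a (Ideal.pow_right_mono h t ha)⟩

lemma powerTorsion_sup (K : Ideal R) (h : J.powerTorsion M = ⊤) :
    (K ⊔ J).powerTorsion M = K.powerTorsion M := by
  refine le_antisymm (powerTorsion_anti M le_sup_left) fun x ⟨s, hs⟩ ↦ ?_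
  obtain ⟨t, ht⟩ : x ∈ J.powerTorsion M := h ▸ Submodule.mem_top
  refine ⟨s + t, fun a ha ↦ ?_⟩
  obtain ⟨b, hb, c, hc, rfl⟩ := Submodule.mem_sup.1 (Ideal.sup_pow_add_le_pow_sup_pow ha)
  rw [add_smul, hs b hb, ht c hc, add_zero]

lemma exists_pow_smul_eq_zero_of_fg {N : Submodule R M} (hN : N.FG) (h : N ≤ J.powerTorsion M) :
    ∃ t : ℕ, ∀ x ∈ N, ∀ a ∈ J ^ t, a • x = 0 := by
  induction N, hN using Submodule.fg_induction with
  | singleton x =>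
    obtain ⟨t, ht⟩ := h (Submodule.mem_span_singleton_self x)
    refine ⟨t, fun y hy a ha ↦ ?_⟩
    obtain ⟨c, rfl⟩ := Submodule.mem_span_singleton.1 hy
    rw [smul_comm, ht a ha, smul_zero]
  | sup N₁ N₂ _ _ h₁ h₂ =>
    obtain ⟨s, hs⟩ := h₁ (le_sup_left.trans h)
    obtain ⟨t, ht⟩ := h₂ (le_sup_right.trans h)
    refine ⟨s + t, fun y hy a ha ↦ ?_⟩
    obtain ⟨y₁, hy₁, y₂, hy₂, rfl⟩ := Submodule.mem_sup.1 hy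
    rw [smul_add, hs y₁ hy₁ a (Ideal.pow_le_pow_right (Nat.le_add_right s t) ha),
      ht y₂ hy₂ a (Ideal.pow_le_pow_right (Nat.le_add_left t s) ha), add_zero]

lemma powerTorsion_quotient_powerTorsion [IsNoetherianRing R] :
    J.powerTorsion (M ⧸ J.powerTorsion M) = ⊥ := by
  refine eq_bot_iff.2 fun x ⟨t, ht⟩ ↦ ?_
  obtain ⟨x, rfl⟩ := Submodule.mkQ_surjective _ x
  have hle : Submodule.map (LinearMap.toSpanSingleton R M x) (J ^ t) ≤ J.powerTorsion M := by
    rintro _ ⟨a, ha, rfl⟩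
    exact (Submodule.Quotient.mk_eq_zero _).1 (ht a ha)
  obtain ⟨s, hs⟩ := exists_pow_smul_eq_zero_of_fg
    (Submodule.FG.map _ ((isNoetherianRing_iff_ideal_fg R).1 inferInstance _)) hle
  refine (Submodule.Quotient.mk_eq_zero _).2 ⟨s + t, fun a ha ↦ ?_⟩
  rw [pow_add] at ha
  induction ha using Submodule.mul_induction_on' with
  | mem_mul_mem b hb c hc =>
    rw [mul_smul]
    exact hs _ ⟨c, hc, rfl⟩ b hb
  | add b _ c _ hb hc => rw [add_smul, hb, hc, add_zero]

end Ideal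

namespace Module.Injective

variable {R : Type u} [CommRing R]

instance powerTorsion [IsNoetherianRing R] (J : Ideal R) (E : Type u) [AddCommGroup E] [Module R E]
    [Module.Injective R E] : Module.Injective R (J.powerTorsion E) := by
  refine Module.Baer.injective fun 𝔞 f ↦ ?_
  obtain ⟨t, ht⟩ := Ideal.exists_pow_smul_eq_zero_of_fg (J := J)
    (N := LinearMap.range ((J.powerTorsion E).subtype ∘ₗ f))
    (Submodule.FG.of_finite) (by rintro _ ⟨a, rfl⟩; exact (f a).2)
  obtain ⟨k, hk⟩ := Ideal.exists_pow_inf_eq_pow_smul (M := R) J 𝔞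
  let g : 𝔞 →ₗ[R] R ⧸ J ^ (t + k) := Submodule.mkQ _ ∘ₗ 𝔞.subtype
  have hgf : LinearMap.ker g ≤ LinearMap.ker ((J.powerTorsion E).subtype ∘ₗ f) := by
    rintro ⟨a, ha⟩ hga
    have hga : a ∈ J ^ (t + k) := (Submodule.Quotient.mk_eq_zero _).1 hga
    have hmem : a ∈ J ^ (t + k) • (⊤ : Submodule R R) ⊓ 𝔞 := ⟨by simpa using hga, ha⟩
    rw [hk _ (Nat.le_add_left k t), Nat.add_sub_cancel] at hmem
    have hmem : a ∈ J ^ t • 𝔞 :=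
      (smul_mono_right (J ^ t) inf_le_right : _ ≤ J ^ t • 𝔞) hmem
    have key : ∀ x ∈ J ^ t • 𝔞, ∃ hx : x ∈ 𝔞, f ⟨x, hx⟩ = 0 := by
      intro x hx
      refine Submodule.smul_induction_on hx (fun b hb c hc ↦ ?_) fun b c h₁ h₂ ↦ ?_
      · refine ⟨𝔞.mul_mem_left b hc, Subtype.ext ?_⟩
        exact (congrArg (J.powerTorsion E).subtype (map_smul f b ⟨c, hc⟩)).trans
          (ht _ ⟨⟨c, hc⟩, rfl⟩ b hb)
      · obtain ⟨hb, hb'⟩ := h₁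
        obtain ⟨hc, hc'⟩ := h₂
        exact ⟨add_mem hb hc, (map_add f ⟨b, hb⟩ ⟨c, hc⟩).trans (by rw [hb', hc', add_zero])⟩
    exact congrArg (J.powerTorsion E).subtype (key a hmem).2
  obtain ⟨q, hq⟩ := Module.Injective.out (Submodule.liftQ _ g le_rfl)
    (LinearMap.ker_eq_bot.1 (Submodule.ker_liftQ_eq_bot _ _ _ le_rfl))
    (Submodule.liftQ _ ((J.powerTorsion E).subtype ∘ₗ f) hgf)
  have hq1 : q (Submodule.Quotient.mk 1) ∈ J.powerTorsion E := by
    refine ⟨t + k, fun a ha ↦ ?_⟩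
    rw [← map_smul, ← Submodule.Quotient.mk_smul, (Submodule.Quotient.mk_eq_zero _).2, map_zero]
    simpa using ha
  refine ⟨LinearMap.toSpanSingleton R _ ⟨_, hq1⟩, fun x hx ↦ Subtype.ext ?_⟩
  have := hq (Submodule.Quotient.mk ⟨x, hx⟩)
  simp only [Submodule.liftQ_apply] at this
  refine Eq.trans ?_ this
  simp only [LinearMap.toSpanSingleton_apply, SetLike.val_smul]
  rw [← map_smul, ← Submodule.Quotient.mk_smul, smul_eq_mul, mul_one]
  rfl

lemma of_retract {E F : Type u} [AddCommGroup E] [Module R E] [AddCommGroup F] [Module R F]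
    [Module.Injective R E] (s : F →ₗ[R] E) (r : E →ₗ[R] F) (h : ∀ x, r (s x) = x) :
    Module.Injective R F where
  out X Y _ _ _ _ f hf g := by
    obtain ⟨q, hq⟩ := Module.Injective.out f hf (s ∘ₗ g)
    exact ⟨r ∘ₗ q, fun x ↦ by simp [hq, h]⟩

instance quotient_powerTorsion [IsNoetherianRing R] (J : Ideal R) (E : Type u) [AddCommGroup E]
    [Module R E] [Module.Injective R E] : Module.Injective R (E ⧸ J.powerTorsion E) := by
  obtain ⟨r, hr⟩ := Module.Injective.out (J.powerTorsion E).subtype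
    (J.powerTorsion E).injective_subtype LinearMap.id
  refine of_retract (Submodule.liftQ _ (LinearMap.id - (J.powerTorsion E).subtype ∘ₗ r) ?_)
    (Submodule.mkQ _) ?_
  · intro x hx
    have := hr ⟨x, hx⟩
    simp only [Submodule.subtype_apply] at this
    simp [this]
  · intro x
    obtain ⟨x, rfl⟩ := Submodule.mkQ_surjective _ x
    simp

lemma exists_embedding (M : Type u) [AddCommGroup M] [Module R M] :
    ∃ (E : Type u) (_ : AddCommGroup E) (_ : Module R E) (f : M →ₗ[R] E),
      Module.Injective R E ∧ Function.Injective f :=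
  let E : ModuleCat.{u} R := CategoryTheory.Injective.under (ModuleCat.of R M)
  have : CategoryTheory.Injective (ModuleCat.of R E) :=
    inferInstanceAs (CategoryTheory.Injective (CategoryTheory.Injective.under (ModuleCat.of R M)))
  ⟨E, inferInstance, inferInstance, (CategoryTheory.Injective.ι (ModuleCat.of R M)).hom,
    Module.injective_module_of_injective_object R E,
    (ModuleCat.mono_iff_injective _).1 inferInstance⟩

lemma smul_surjective {E : Type u} [AddCommGroup E] [Module R E] [Module.Injective R E] {y : R}
    (hy : Function.Injective (fun x : E ↦ y • x)) : Function.Surjective (fun x : E ↦ y • x) := by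
  obtain ⟨q, hq⟩ := Module.Injective.out (LinearMap.lsmul R E y) hy LinearMap.id
  exact fun x ↦ ⟨q x, by simpa using hq x⟩

variable [IsNoetherianRing R]

lemma exists_embedding_of_powerTorsion_eq_top {J : Ideal R} {M : Type u} [AddCommGroup M]
    [Module R M] (h : J.powerTorsion M = ⊤) :
    ∃ (E : Type u) (_ : AddCommGroup E) (_ : Module R E) (f : M →ₗ[R] E),
      Module.Injective R E ∧ Function.Injective f ∧ J.powerTorsion E = ⊤ := by
  obtain ⟨E, _, _, f, hE, hf⟩ := exists_embedding (R := R) M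
  exact ⟨J.powerTorsion E, inferInstance, inferInstance,
    f.codRestrict _ fun x ↦ Ideal.map_mem_powerTorsion f (h ▸ Submodule.mem_top), inferInstance,
    fun x y hxy ↦ hf congr(($hxy : E)), Ideal.powerTorsion_powerTorsion⟩

lemma exists_embedding_of_powerTorsion_eq_bot {J : Ideal R} {M : Type u} [AddCommGroup M]
    [Module R M] (h : J.powerTorsion M = ⊥) :
    ∃ (E : Type u) (_ : AddCommGroup E) (_ : Module R E) (f : M →ₗ[R] E),
      Module.Injective R E ∧ Function.Injective f ∧ J.powerTorsion E = ⊥ := by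
  obtain ⟨E, _, _, f, hE, hf⟩ := exists_embedding (R := R) M
  refine ⟨E ⧸ J.powerTorsion E, inferInstance, inferInstance, Submodule.mkQ _ ∘ₗ f, inferInstance,
    (injective_iff_map_eq_zero _).2 fun x hx ↦ ?_, Ideal.powerTorsion_quotient_powerTorsion⟩
  have := (Ideal.map_mem_powerTorsion_iff hf).1 ((Submodule.Quotient.mk_eq_zero _).1 hx)
  rwa [h] at this

end Module.Injective

namespace localCohomology

variable {R : Type u} [CommRing R]

/-- `Vanishes J i M` says that `H^i_J(M) = 0`. -/
abbrev Vanishes (J : Ideal R) (i : ℕ) (M : Type u) [AddCommGroup M] [Module R M] : Prop :=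
  Subsingleton ((localCohomology J i).obj (ModuleCat.of R M))

variable {J : Ideal R}

lemma vanishes_zero_iff {M : Type u} [AddCommGroup M] [Module R M] :
    Vanishes J 0 M ↔ J.powerTorsion M = ⊥ := by
  constructor
  · intro h
    refine eq_bot_iff.2 fun x hx ↦ ?_
    obtain ⟨y, hy⟩ := (mem_range_zeroι (J := J) (M := ModuleCat.of R M)).2 hx
    rw [Subsingleton.elim y 0, map_zero] at hy
    exact hy.symm
  · intro h
    refine subsingleton_of_forall_eq 0 fun x ↦ zeroι_injective (ModuleCat.of R M) ?_
    have : (zeroι J).app (ModuleCat.of R M) x ∈ J.powerTorsion M :=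
      (mem_range_zeroι (J := J) (M := ModuleCat.of R M)).1 ⟨x, rfl⟩
    rw [h] at this
    exact this.trans (map_zero _).symm

lemma Vanishes.of_injective (i : ℕ) (E : Type u) [AddCommGroup E] [Module R E]
    [Module.Injective R E] : Vanishes J (i + 1) E :=
  have : CategoryTheory.Injective (ModuleCat.of R E) :=
    Module.injective_object_of_injective_module R E
  subsingleton_of_injective i _

section Exact

variable {A B C : Type u} [AddCommGroup A] [AddCommGroup B] [AddCommGroup C]
  [Module R A] [Module R B] [Module R C] {f : A →ₗ[R] B} {g : B →ₗ[R] C}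

lemma shortExact_of_function_exact (hf : Function.Injective f) (hg : Function.Surjective g)
    (h : Function.Exact f g) :
    (ModuleCat.shortComplexOfCompEqZero f g h.linearMap_comp_eq_zero).ShortExact :=
  ModuleCat.shortComplex_shortExact _ h hf hg

lemma Vanishes.middle (hf : Function.Injective f) (hg : Function.Surjective g)
    (h : Function.Exact f g) {i : ℕ} (hA : Vanishes J i A) (hC : Vanishes J i C) :
    Vanishes J i B := by
  refine subsingleton_of_forall_eq 0 fun x ↦ ?_
  obtain ⟨y, rfl⟩ := (map_exact (J := J) (shortExact_of_function_exact hf hg h) i x).1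
    (Subsingleton.elim (α := (localCohomology J i).obj (ModuleCat.of R C)) _ _)
  rw [Subsingleton.elim (α := (localCohomology J i).obj (ModuleCat.of R A)) y 0, map_zero]

lemma Vanishes.left (hf : Function.Injective f) (hg : Function.Surjective g)
    (h : Function.Exact f g) {i : ℕ} (hB : Vanishes J (i + 1) B) (hC : Vanishes J i C) :
    Vanishes J (i + 1) A := by
  refine subsingleton_of_forall_eq 0 fun x ↦ ?_
  obtain ⟨y, rfl⟩ := (exact_δ_map (J := J) (shortExact_of_function_exact hf hg h) i x).1
    (Subsingleton.elim (α := (localCohomology J (i + 1)).obj (ModuleCat.of R B)) _ _)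
  rw [Subsingleton.elim (α := (localCohomology J i).obj (ModuleCat.of R C)) y 0, map_zero]

lemma Vanishes.right (hf : Function.Injective f) (hg : Function.Surjective g)
    (h : Function.Exact f g) {i : ℕ} (hB : Vanishes J i B) (hA : Vanishes J (i + 1) A) :
    Vanishes J i C := by
  refine subsingleton_of_forall_eq 0 fun x ↦ ?_
  obtain ⟨y, rfl⟩ := (exact_map_δ (J := J) (shortExact_of_function_exact hf hg h) i x).1
    (Subsingleton.elim (α := (localCohomology J (i + 1)).obj (ModuleCat.of R A)) _ _)
  rw [Subsingleton.elim (α := (localCohomology J i).obj (ModuleCat.of R B)) y 0, map_zero]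

lemma vanishes_one_iff (hf : Function.Injective f) (hg : Function.Surjective g)
    (h : Function.Exact f g) [Module.Injective R B] :
    Vanishes J 1 A ↔ ∀ x ∈ J.powerTorsion C, ∃ y ∈ J.powerTorsion B, g y = x := by
  have hS := shortExact_of_function_exact hf hg h
  have nat (y : (localCohomology J 0).obj (ModuleCat.of R B)) :
      (zeroι J).app (ModuleCat.of R C) ((localCohomology J 0).map (ModuleCat.ofHom g) y) =
        g ((zeroι J).app (ModuleCat.of R B) y) :=
    congr($((zeroι J).naturality (ModuleCat.ofHom g)) y)
  constructor
  · intro hA x hx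
    obtain ⟨z, rfl⟩ := (mem_range_zeroι (J := J) (M := ModuleCat.of R C)).2 hx
    obtain ⟨y, rfl⟩ := (exact_map_δ (J := J) hS 0 z).1
      (Subsingleton.elim (α := (localCohomology J (0 + 1)).obj (ModuleCat.of R A)) _ _)
    exact ⟨(zeroι J).app (ModuleCat.of R B) y,
      (mem_range_zeroι (J := J) (M := ModuleCat.of R B)).1 ⟨y, rfl⟩, (nat y).symm⟩
  · intro H
    refine subsingleton_of_forall_eq 0 fun x ↦ ?_
    have hB : Vanishes J (0 + 1) B := Vanishes.of_injective 0 B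
    obtain ⟨z, rfl⟩ := (exact_δ_map (J := J) hS 0 x).1
      (Subsingleton.elim (α := (localCohomology J (0 + 1)).obj (ModuleCat.of R B)) _ _)
    obtain ⟨y, hy, hyz⟩ := H ((zeroι J).app (ModuleCat.of R C) z)
      ((mem_range_zeroι (J := J) (M := ModuleCat.of R C)).1 ⟨z, rfl⟩)
    obtain ⟨w, rfl⟩ := (mem_range_zeroι (J := J) (M := ModuleCat.of R B)).2 hy
    refine (exact_map_δ (J := J) hS 0 z).2 ⟨w, zeroι_injective _ ?_⟩
    exact (nat w).trans hyz

end Exact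

variable {M : Type u} [AddCommGroup M] [Module R M]

/-- A class of `J`-torsion-free modules, closed under cokernels of suitable embeddings into
injectives, consists of modules with vanishing local cohomology. -/
lemma Vanishes.of_class (P : ∀ (N : Type u) [AddCommGroup N] [Module R N], Prop)
    (hP : ∀ (N : Type u) [AddCommGroup N] [Module R N], P N → J.powerTorsion N = ⊥ ∧
      ∃ (E : Type u) (_ : AddCommGroup E) (_ : Module R E) (f : N →ₗ[R] E),
        Module.Injective R E ∧ Function.Injective f ∧ P (E ⧸ LinearMap.range f))
    (hM : P M) (p : ℕ) : Vanishes J p M := by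
  induction p generalizing M with
  | zero => exact vanishes_zero_iff.2 (hP M hM).1
  | succ p ih =>
    obtain ⟨-, E, _, _, f, _, hf, hQ⟩ := hP M hM
    exact Vanishes.left hf (Submodule.mkQ_surjective _) f.exact_map_mkQ_range
      (Vanishes.of_injective p E) (ih hQ)

lemma powerTorsion_span_singleton_eq_bot {y : R}
    (hy : Function.Injective (fun x : M ↦ y • x)) : (Ideal.span {y}).powerTorsion M = ⊥ := by
  refine eq_bot_iff.2 fun x hx ↦ ?_
  obtain ⟨t, ht⟩ := Ideal.mem_powerTorsion_span_singleton.1 hx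
  induction t with
  | zero => simpa using ht
  | succ t ih => exact ih (hy (by simpa [pow_succ', mul_smul] using ht))

lemma smul_injective_of_powerTorsion_eq_bot {y : R}
    (h : (Ideal.span {y}).powerTorsion M = ⊥) : Function.Injective (fun x : M ↦ y • x) := by
  refine (injective_iff_map_eq_zero (LinearMap.lsmul R M y)).2 fun x hx ↦ ?_
  have : x ∈ (Ideal.span {y}).powerTorsion M :=
    Ideal.mem_powerTorsion_span_singleton.2 ⟨1, by simpa using hx⟩
  rwa [h] at this

variable [IsNoetherianRing R]

lemma Vanishes.of_smul_bijective {y : R} (hyJ : y ∈ J)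
    (hM : Function.Bijective (fun x : M ↦ y • x)) (p : ℕ) : Vanishes J p M := by
  have hle : Ideal.span {y} ≤ J := (Ideal.span_singleton_le_iff_mem J).2 hyJ
  refine Vanishes.of_class (fun N _ _ ↦ Function.Bijective (fun x : N ↦ y • x))
    (fun N _ _ hN ↦ ?_) hM p
  have hN0 := powerTorsion_span_singleton_eq_bot hN.1
  refine ⟨eq_bot_iff.2 ((Ideal.powerTorsion_anti N hle).trans hN0.le), ?_⟩
  obtain ⟨E, _, _, f, hE, hf, hE0⟩ := Module.Injective.exists_embedding_of_powerTorsion_eq_bot hN0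
  have hyE := smul_injective_of_powerTorsion_eq_bot hE0
  refine ⟨E, inferInstance, inferInstance, f, hE, hf, ?_, fun x ↦ ?_⟩
  · refine (injective_iff_map_eq_zero (LinearMap.lsmul R (E ⧸ LinearMap.range f) y)).2 fun x hx ↦ ?_
    obtain ⟨x, rfl⟩ := Submodule.mkQ_surjective _ x
    obtain ⟨n, hn⟩ := (Submodule.Quotient.mk_eq_zero (LinearMap.range f) (x := y • x)).1 hx
    obtain ⟨m, rfl⟩ := hN.2 n
    refine (Submodule.Quotient.mk_eq_zero _).2 ⟨m, hyE ?_⟩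
    simpa using hn
  · obtain ⟨x, rfl⟩ := Submodule.mkQ_surjective _ x
    obtain ⟨z, rfl⟩ := Module.Injective.smul_surjective hyE x
    exact ⟨Submodule.mkQ _ z, by simp⟩

lemma Vanishes.of_le {I : Ideal R} (hIJ : I ≤ J) (hM : ∀ q, Vanishes I q M) (p : ℕ) :
    Vanishes J p M := by
  refine Vanishes.of_class (fun N _ _ ↦ ∀ q, Vanishes I q N) (fun N _ _ hN ↦ ?_) hM p
  have hN0 := vanishes_zero_iff.1 (hN 0)
  refine ⟨eq_bot_iff.2 ((Ideal.powerTorsion_anti N hIJ).trans hN0.le), ?_⟩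
  obtain ⟨E, _, _, f, hE, hf, hE0⟩ := Module.Injective.exists_embedding_of_powerTorsion_eq_bot hN0
  refine ⟨E, inferInstance, inferInstance, f, hE, hf, fun q ↦ ?_⟩
  refine Vanishes.right hf (Submodule.mkQ_surjective _) f.exact_map_mkQ_range ?_ (hN (q + 1))
  cases q with
  | zero => exact vanishes_zero_iff.2 hE0
  | succ q => exact Vanishes.of_injective q E

lemma Vanishes.of_powerTorsion_eq_top (hM : J.powerTorsion M = ⊤) (q : ℕ) :
    Vanishes J (q + 1) M := by
  induction q generalizing M with
  | zero =>
    obtain ⟨E, _, _, f, hE, hf, hE1⟩ := Module.Injective.exists_embedding_of_powerTorsion_eq_top hM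
    refine (vanishes_one_iff hf (Submodule.mkQ_surjective _) f.exact_map_mkQ_range).2
      fun x _ ↦ ?_
    obtain ⟨y, rfl⟩ := Submodule.mkQ_surjective _ x
    exact ⟨y, hE1 ▸ Submodule.mem_top, rfl⟩
  | succ q ih =>
    obtain ⟨E, _, _, f, hE, hf, hE1⟩ := Module.Injective.exists_embedding_of_powerTorsion_eq_top hM
    exact Vanishes.left hf (Submodule.mkQ_surjective _) f.exact_map_mkQ_range
      (Vanishes.of_injective (q + 1) E)
      (ih (Ideal.powerTorsion_eq_top_of_surjective (LinearMap.range f).mkQ_surjective hE1))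

lemma vanishes_sup_iff {y : R} (K : Ideal R) (hM : (Ideal.span {y}).powerTorsion M = ⊤) (p : ℕ) :
    Vanishes (K ⊔ Ideal.span {y}) p M ↔ Vanishes K p M := by
  induction p generalizing M with
  | zero => rw [vanishes_zero_iff, vanishes_zero_iff, Ideal.powerTorsion_sup K hM]
  | succ p ih =>
    obtain ⟨E, _, _, f, hE, hf, hE1⟩ := Module.Injective.exists_embedding_of_powerTorsion_eq_top hM
    have hQ := Ideal.powerTorsion_eq_top_of_surjective (LinearMap.range f).mkQ_surjective hE1
    cases p with
    | zero =>
      rw [vanishes_one_iff hf (Submodule.mkQ_surjective _) f.exact_map_mkQ_range,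
        vanishes_one_iff hf (Submodule.mkQ_surjective _) f.exact_map_mkQ_range,
        Ideal.powerTorsion_sup K hE1, Ideal.powerTorsion_sup K hQ]
    | succ p =>
      have key (L : Ideal R) : Vanishes L (p + 1 + 1) M ↔
          Vanishes L (p + 1) (E ⧸ LinearMap.range f) :=
        ⟨Vanishes.right hf (Submodule.mkQ_surjective _) f.exact_map_mkQ_range
          (Vanishes.of_injective p E),
        Vanishes.left hf (Submodule.mkQ_surjective _) f.exact_map_mkQ_range
          (Vanishes.of_injective (p + 1) E)⟩
      rw [key, key, ih hQ]

/-- The local cohomology of an `I`-torsion module with support in an ideal generated by `I` and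
`d` elements vanishes above degree `d`. -/
lemma Vanishes.of_card_lt {I : Ideal R} (s : Finset R) (hM : I.powerTorsion M = ⊤) {p : ℕ}
    (hp : s.card < p) : Vanishes (I ⊔ Ideal.span s) p M := by
  classical
  induction s using Finset.induction_on generalizing M p with
  | empty =>
    obtain ⟨p, rfl⟩ := Nat.exists_eq_succ_of_ne_zero (Nat.pos_iff_ne_zero.1 hp)
    simpa using Vanishes.of_powerTorsion_eq_top hM p
  | insert y s hy ih =>
    rw [Finset.card_insert_of_notMem hy] at hp
    have hK : I ⊔ Ideal.span ((insert y s : Finset R) : Set R) =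
        (I ⊔ Ideal.span s) ⊔ Ideal.span {y} := by
      rw [Finset.coe_insert, Ideal.span_insert, sup_comm (Ideal.span {y}), sup_assoc]
    rw [hK]
    have hyK : y ∈ (I ⊔ Ideal.span s) ⊔ Ideal.span {y} :=
      Ideal.mem_sup_right (Ideal.mem_span_singleton_self y)
    have htors {N : Type u} [AddCommGroup N] [Module R N] (hN : I.powerTorsion N = ⊤) {q : ℕ}
        (hq : s.card < q) : Vanishes ((I ⊔ Ideal.span s) ⊔ Ideal.span {y}) q
          ((Ideal.span {y}).powerTorsion N) :=
      (vanishes_sup_iff _ Ideal.powerTorsion_powerTorsion q).2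
        (ih (Ideal.powerTorsion_eq_top_of_injective (Submodule.injective_subtype _) hN) hq)
    refine Vanishes.middle (Submodule.injective_subtype ((Ideal.span {y}).powerTorsion M))
      (Submodule.mkQ_surjective _) (LinearMap.exact_subtype_mkQ _) (htors hM (by lia)) ?_
    have hN : I.powerTorsion (M ⧸ (Ideal.span {y}).powerTorsion M) = ⊤ :=
      Ideal.powerTorsion_eq_top_of_surjective (Submodule.mkQ_surjective _) hM
    obtain ⟨E₀, _, _, f₀, _, hf₀, hE₀⟩ := Module.Injective.exists_embedding_of_powerTorsion_eq_bot
      (Ideal.powerTorsion_quotient_powerTorsion (J := Ideal.span {y}) (M := M))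
    let f : (M ⧸ (Ideal.span {y}).powerTorsion M) →ₗ[R] I.powerTorsion E₀ :=
      f₀.codRestrict _ fun x ↦ Ideal.map_mem_powerTorsion f₀ (hN ▸ Submodule.mem_top)
    have hf : Function.Injective f := fun x z hxz ↦ hf₀ congr(($hxz : E₀))
    have hyE := smul_injective_of_powerTorsion_eq_bot (M := I.powerTorsion E₀)
      (Ideal.powerTorsion_eq_bot_of_injective (Submodule.injective_subtype _) hE₀)
    have hyE' := Module.Injective.smul_surjective hyE
    have hE : I.powerTorsion (I.powerTorsion E₀) = ⊤ := Ideal.powerTorsion_powerTorsion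
    obtain ⟨p, rfl⟩ := Nat.exists_eq_succ_of_ne_zero (Nat.ne_zero_of_lt hp)
    refine Vanishes.left hf (Submodule.mkQ_surjective _) f.exact_map_mkQ_range
      (Vanishes.of_smul_bijective hyK ⟨hyE, hyE'⟩ _) ?_
    have hQ : I.powerTorsion (I.powerTorsion E₀ ⧸ LinearMap.range f) = ⊤ :=
      Ideal.powerTorsion_eq_top_of_surjective (Submodule.mkQ_surjective _) hE
    refine Vanishes.middle (Submodule.injective_subtype ((Ideal.span {y}).powerTorsion
      (I.powerTorsion E₀ ⧸ LinearMap.range f)))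
      (Submodule.mkQ_surjective _) (LinearMap.exact_subtype_mkQ _) (htors hQ (by lia)) ?_
    refine Vanishes.of_smul_bijective hyK ⟨smul_injective_of_powerTorsion_eq_bot
      Ideal.powerTorsion_quotient_powerTorsion, fun x ↦ ?_⟩ p
    obtain ⟨x, rfl⟩ := Submodule.mkQ_surjective _ x
    obtain ⟨x, rfl⟩ := Submodule.mkQ_surjective _ x
    obtain ⟨z, rfl⟩ := hyE' x
    exact ⟨Submodule.mkQ _ (Submodule.mkQ _ z), by simp⟩

end localCohomology

/-- If every prime containing `I` has height at least `h`, then `dim R/I + h ≤ dim R`. -/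
lemma Ideal.ringKrullDim_quotient_add_le {R : Type*} [CommRing R] (I : Ideal R) {h : ℕ∞}
    (hI : ∀ p : PrimeSpectrum R, I ≤ p.asIdeal → h ≤ Order.height p) :
    ringKrullDim (R ⧸ I) + h ≤ ringKrullDim R := by
  rw [ringKrullDim_quotient, ringKrullDim, Order.krullDim_eq_iSup_coheight]
  rcases isEmpty_or_nonempty (PrimeSpectrum.zeroLocus (R := R) I) with hV | hV
  · simp
  have : Nonempty (PrimeSpectrum R) := hV.map Subtype.val
  rw [← WithBot.coe_iSup (OrderTop.bddAbove _), ← WithBot.coe_add,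
    Order.krullDim_eq_iSup_height_add_coheight_of_nonempty, WithBot.coe_le_coe, ENat.iSup_add]
  refine iSup_le fun p ↦ le_trans ?_ (le_iSup _ p.1)
  rw [add_comm]
  exact add_le_add (hI p.1 p.2)
    (Order.coheight_le_coheight_apply_of_strictMono _ (Subtype.strictMono_coe _) p)

lemma IsLocalRing.exists_finset_radical_sup_span_eq {R : Type*} [CommRing R] [IsNoetherianRing R]
    [IsLocalRing R] {I : Ideal R} (hI : I ≠ ⊤) :
    ∃ s : Finset R, (s.card : WithBot ℕ∞) ≤ ringKrullDim (R ⧸ I) ∧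
      (I ⊔ Ideal.span s).radical = IsLocalRing.maximalIdeal R := by
  classical
  have : Nontrivial (R ⧸ I) := Ideal.Quotient.nontrivial_iff.2 hI
  have : IsLocalRing (R ⧸ I) :=
    IsLocalRing.of_surjective' (Ideal.Quotient.mk I) Ideal.Quotient.mk_surjective
  obtain ⟨s, hs, hcard⟩ := Ideal.exists_finset_card_eq_height_of_isNoetherianRing
    (IsLocalRing.maximalIdeal (R ⧸ I))
  have hmk : Ideal.map (Ideal.Quotient.mk I) (Ideal.span (s.image Quotient.out : Finset R)) =
      Ideal.span s := by
    simp [Ideal.map_span, Set.image_image]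
  refine ⟨s.image Quotient.out, ?_, le_antisymm ?_ ?_⟩
  · rw [← IsLocalRing.maximalIdeal_height_eq_ringKrullDim, ← hcard]
    exact_mod_cast Finset.card_image_le
  · rw [(IsLocalRing.maximalIdeal.isMaximal R).isPrime.radical_le_iff]
    refine IsLocalRing.le_maximalIdeal fun htop ↦ ?_
    have h1 : Ideal.map (Ideal.Quotient.mk I)
        (I ⊔ Ideal.span (s.image Quotient.out : Finset R)) = ⊤ := by
      rw [htop, Ideal.map_top]
    rw [Ideal.map_sup, hmk, Ideal.map_quotient_self, bot_sup_eq] at h1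
    exact (IsLocalRing.maximalIdeal.isMaximal (R ⧸ I)).ne_top (top_le_iff.1 (h1 ▸ hs.1.2))
  · rw [Ideal.radical_eq_sInf]
    refine le_sInf fun p ⟨hle, hp⟩ ↦ ?_
    have hIp : I ≤ p := le_sup_left.trans hle
    have hp' : (p.map (Ideal.Quotient.mk I)).IsPrime := Ideal.isPrime_map_quotientMk_of_isPrime hIp
    have hsp : Ideal.span s ≤ p.map (Ideal.Quotient.mk I) :=
      hmk ▸ Ideal.map_mono (le_sup_right.trans hle)
    have heq : p.map (Ideal.Quotient.mk I) = IsLocalRing.maximalIdeal (R ⧸ I) :=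
      le_antisymm (IsLocalRing.le_maximalIdeal hp'.ne_top)
        (hs.2 ⟨hp', hsp⟩ (IsLocalRing.le_maximalIdeal hp'.ne_top))
    have hmax : p.IsMaximal := by
      have : (p.map (Ideal.Quotient.mk I)).IsMaximal := heq ▸ inferInstance
      have h2 := Ideal.comap_isMaximal_of_surjective (Ideal.Quotient.mk I)
        Ideal.Quotient.mk_surjective (K := p.map (Ideal.Quotient.mk I))
      rwa [Ideal.comap_map_of_surjective _ Ideal.Quotient.mk_surjective, ← RingHom.ker_eq_comap_bot,
        Ideal.mk_ker, sup_eq_left.2 hIp] at h2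
    exact (IsLocalRing.eq_maximalIdeal hmax).ge

/-- The local cohomology with support in the maximal ideal of an `I`-torsion module vanishes
above `dim R/I`. -/
lemma localCohomology.Vanishes.maximalIdeal {R : Type u} [CommRing R] [IsNoetherianRing R]
    [IsLocalRing R] {I : Ideal R} (hI : I ≠ ⊤) {d : ℕ} (hd : ringKrullDim (R ⧸ I) ≤ d)
    {M : Type u} [AddCommGroup M] [Module R M] (hM : I.powerTorsion M = ⊤) {p : ℕ} (hp : d < p) :
    Vanishes (IsLocalRing.maximalIdeal R) p M := by
  obtain ⟨s, hs, hrad⟩ := IsLocalRing.exists_finset_radical_sup_span_eq hI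
  have hsd : s.card ≤ d := by exact_mod_cast hs.trans hd
  have := Vanishes.of_card_lt s hM (hsd.trans_lt hp)
  have hrad' : (I ⊔ Ideal.span s).radical = (IsLocalRing.maximalIdeal R).radical := by
    rw [hrad, (IsLocalRing.maximalIdeal.isMaximal R).isPrime.radical]
  exact ((isoOfSameRadical hrad' p).app
    (ModuleCat.of R M)).toLinearEquiv.symm.injective.subsingleton

lemma LinearMap.nonempty_linearEquiv_of_exact {R : Type*} [Ring R] {A B C A' B' C' : Type*}
    [AddCommGroup A] [AddCommGroup B] [AddCommGroup C] [AddCommGroup A'] [AddCommGroup B']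
    [AddCommGroup C'] [Module R A] [Module R B] [Module R C] [Module R A'] [Module R B']
    [Module R C'] {a : A →ₗ[R] B} {b : B →ₗ[R] C} {a' : A' →ₗ[R] B'} {b' : B' →ₗ[R] C'}
    (hab : Function.Exact a b) (hb : Function.Surjective b)
    (hab' : Function.Exact a' b') (hb' : Function.Surjective b')
    {α : A →ₗ[R] A'} {β : B →ₗ[R] B'} (hα : Function.Surjective α) (hβ : Function.Bijective β)
    (h : ∀ x, β (a x) = a' (α x)) : Nonempty (C ≃ₗ[R] C') := by
  have hmap : (LinearMap.ker b).map (LinearEquiv.ofBijective β hβ : B →ₗ[R] B') =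
      LinearMap.ker b' := by
    rw [hab.linearMap_ker_eq, hab'.linearMap_ker_eq]
    ext y
    constructor
    · rintro ⟨_, ⟨x, rfl⟩, rfl⟩
      exact ⟨α x, (h x).symm⟩
    · rintro ⟨x, rfl⟩
      obtain ⟨x, rfl⟩ := hα x
      exact ⟨_, ⟨x, rfl⟩, h x⟩
  exact ⟨(b.quotKerEquivOfSurjective hb).symm ≪≫ₗ
    Submodule.Quotient.equiv _ _ (LinearEquiv.ofBijective β hβ) hmap ≪≫ₗ
    b'.quotKerEquivOfSurjective hb'⟩

namespace localCohomology

variable {R : Type u} [CommRing R] {I J : Ideal R}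

lemma powerTorsion_zero (M : ModuleCat.{u} R) :
    I.powerTorsion ((localCohomology I 0).obj M) = ⊤ :=
  eq_top_iff.2 fun x _ ↦ (Ideal.map_mem_powerTorsion_iff
    (f := ((zeroι I).app M).hom) (zeroι_injective M)).1 (mem_range_zeroι.1 ⟨x, rfl⟩)

lemma range_zeroι (M : ModuleCat.{u} R) :
    LinearMap.range ((zeroι I).app M).hom = I.powerTorsion M :=
  SetLike.ext fun _ ↦ mem_range_zeroι

lemma map_zero_injective {M N : ModuleCat.{u} R} {f : M ⟶ N} (hf : Function.Injective f) :
    Function.Injective ((localCohomology J 0).map f) := by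
  intro x y hxy
  have h (z) : (zeroι J).app N ((localCohomology J 0).map f z) = f ((zeroι J).app M z) :=
    congr($((zeroι J).naturality f) z)
  refine zeroι_injective M (hf ?_)
  exact (h x).symm.trans ((congrArg _ hxy).trans (h y))

variable {S : ShortComplex (ModuleCat.{u} R)} (hS : S.ShortExact)

lemma δ_surjective {i : ℕ} (h : Subsingleton ((localCohomology J (i + 1)).obj S.X₂)) :
    Function.Surjective (δ J hS i) :=
  fun x ↦ (exact_δ_map hS i x).1 (Subsingleton.elim _ _)

lemma δ_injective {i : ℕ} (h : Subsingleton ((localCohomology J i).obj S.X₂)) :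
    Function.Injective (δ J hS i) := by
  refine (injective_iff_map_eq_zero _).2 fun x hx ↦ ?_
  obtain ⟨y, rfl⟩ := (exact_map_δ hS i x).1 hx
  rw [Subsingleton.elim y 0, map_zero]

lemma nonempty_iso_of_subsingleton {S : ShortComplex (ModuleCat.{u} R)} (hS : S.ShortExact)
    {i : ℕ} (h : Subsingleton ((localCohomology J i).obj S.X₂))
    (h' : Subsingleton ((localCohomology J (i + 1)).obj S.X₂)) :
    Nonempty ((localCohomology J i).obj S.X₃ ≅ (localCohomology J (i + 1)).obj S.X₁) :=
  ⟨(LinearEquiv.ofBijective (δ J hS i).hom ⟨δ_injective hS h, δ_surjective hS h'⟩).toModuleIso⟩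

lemma map_surjective {S : ShortComplex (ModuleCat.{u} R)} (hS : S.ShortExact) {i : ℕ}
    (h : Subsingleton ((localCohomology J (i + 1)).obj S.X₁)) :
    Function.Surjective ((localCohomology J i).map S.g) :=
  fun x ↦ (exact_map_δ hS i x).1 (Subsingleton.elim _ _)

lemma map_bijective {S : ShortComplex (ModuleCat.{u} R)} (hS : S.ShortExact)
    (h : ∀ q, Subsingleton ((localCohomology J q).obj S.X₃)) (i : ℕ) :
    Function.Bijective ((localCohomology J i).map S.f) := by
  refine ⟨?_, fun x ↦ (map_exact hS i x).1 ((h i).elim _ _)⟩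
  cases i with
  | zero => exact map_zero_injective hS.moduleCat_injective_f
  | succ i =>
    refine (injective_iff_map_eq_zero _).2 fun x hx ↦ ?_
    obtain ⟨y, rfl⟩ := (exact_δ_map hS i x).1 hx
    rw [(h i).elim y 0, map_zero]

/-- If `H^q_I(M) = 0` for all `q > 0`, then `H^•_J(H^0_I(M)) = H^•_J(M)` for `I ≤ J`. -/
lemma map_zeroι_bijective [IsNoetherianRing R] (hIJ : I ≤ J) {M : ModuleCat.{u} R}
    (hM : ∀ q, Subsingleton ((localCohomology I (q + 1)).obj M)) (d : ℕ) :
    Function.Bijective ((localCohomology J d).map ((zeroι I).app M)) := by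
  let f : ((localCohomology I 0).obj M) →ₗ[R] M := ((zeroι I).app M).hom
  have hf : Function.Injective f := zeroι_injective M
  have hQ (q : ℕ) : Vanishes I q (M ⧸ LinearMap.range f) := by
    cases q with
    | zero =>
      rw [vanishes_zero_iff, show LinearMap.range f = _ from range_zeroι M]
      exact Ideal.powerTorsion_quotient_powerTorsion
    | succ q =>
      exact Vanishes.right hf (Submodule.mkQ_surjective _) f.exact_map_mkQ_range (hM q)
        (Vanishes.of_powerTorsion_eq_top (powerTorsion_zero M) (q + 1))
  exact map_bijective (shortExact_of_function_exact hf (Submodule.mkQ_surjective _)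
    f.exact_map_mkQ_range) (Vanishes.of_le hIJ hQ) d

/-- If `H^{d+1}_J` vanishes on `I`-torsion modules, then `H^d_J` is right exact on them. -/
lemma rightExact {d : ℕ} (hd : ∀ (T : Type u) [AddCommGroup T] [Module R T],
      I.powerTorsion T = ⊤ → Vanishes J (d + 1) T)
    {A B C : ModuleCat.{u} R} {a : A ⟶ B} {b : B ⟶ C} (hab : Function.Exact a b)
    (hb : Function.Surjective b) (hA : I.powerTorsion A = ⊤) (hB : I.powerTorsion B = ⊤) :
    Function.Exact ((localCohomology J d).map a) ((localCohomology J d).map b) ∧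
      Function.Surjective ((localCohomology J d).map b) := by
  let K := LinearMap.ker b.hom
  have hSb := LinearMap.shortExact_shortComplexKer hb
  let a' : A →ₗ[R] K := a.hom.codRestrict K fun x ↦ (hab (a x)).2 ⟨x, rfl⟩
  have ha' : Function.Surjective a' := by
    rintro ⟨x, hx⟩
    obtain ⟨y, rfl⟩ := (hab x).1 hx
    exact ⟨y, rfl⟩
  have hSa := LinearMap.shortExact_shortComplexKer ha'
  have hK : I.powerTorsion K = ⊤ :=
    Ideal.powerTorsion_eq_top_of_injective (Submodule.injective_subtype _) hB
  have hL : I.powerTorsion (LinearMap.ker a') = ⊤ :=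
    Ideal.powerTorsion_eq_top_of_injective (Submodule.injective_subtype _) hA
  have hsurj := map_surjective hSa (hd _ hL)
  refine ⟨fun x ↦ (map_exact hSb d x).trans ?_, map_surjective hSb (hd _ hK)⟩
  have hcomp : a = ModuleCat.ofHom a' ≫ ModuleCat.ofHom K.subtype := rfl
  have hrange (y) : (localCohomology J d).map a y = (localCohomology J d).map
      (ModuleCat.ofHom K.subtype) ((localCohomology J d).map (ModuleCat.ofHom a') y) :=
    congr($((congrArg _ hcomp).trans ((localCohomology J d).map_comp _ _)) y)
  constructor
  · rintro ⟨y, rfl⟩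
    obtain ⟨y, rfl⟩ := hsurj y
    exact ⟨y, hrange y⟩
  · rintro ⟨y, rfl⟩
    exact ⟨_, (hrange y).symm⟩

/-- If `H^p_J` vanishes on `I`-torsion modules for `p = d + 1` and `H^q_I(M) = 0` for `q > h`,
then `H^d_J(H^h_I(M)) ≅ H^{d + h}_J(M)`. -/
theorem nonempty_iso_of_vanishes [IsNoetherianRing R] (hIJ : I ≤ J) {d : ℕ}
    (hd : ∀ (T : Type u) [AddCommGroup T] [Module R T],
      I.powerTorsion T = ⊤ → Vanishes J (d + 1) T)
    (h : ℕ) (M : ModuleCat.{u} R) (hM : ∀ q, h < q → Subsingleton ((localCohomology I q).obj M)) :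
    Nonempty ((localCohomology J d).obj ((localCohomology I h).obj M) ≅
      (localCohomology J (d + h)).obj M) := by
  induction h generalizing M with
  | zero =>
    exact ⟨(LinearEquiv.ofBijective ((localCohomology J d).map ((zeroι I).app M)).hom
      (map_zeroι_bijective hIJ (fun q ↦ hM _ q.succ_pos) d)).toModuleIso⟩
  | succ h ih =>
    let S : ShortComplex (ModuleCat.{u} R) :=
      ShortComplex.mk (CategoryTheory.Injective.ι M) (cokernel.π (CategoryTheory.Injective.ι M))
        (cokernel.condition _)
    have hS : S.ShortExact :=
      { exact := ShortComplex.exact_cokernel _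
        mono_f := inferInstanceAs (Mono (CategoryTheory.Injective.ι M))
        epi_g := inferInstanceAs (Epi (cokernel.π _)) }
    have hE (K : Ideal R) (i : ℕ) : Subsingleton ((localCohomology K (i + 1)).obj S.X₂) :=
      subsingleton_of_injective i (CategoryTheory.Injective.under M)
    have hN (q : ℕ) (hq : h < q) : Subsingleton ((localCohomology I q).obj S.X₃) := by
      obtain ⟨q, rfl⟩ := Nat.exists_eq_succ_of_ne_zero (Nat.ne_zero_of_lt hq)
      have := hM (q + 1 + 1) (by lia)
      exact (δ_injective hS (hE I q)).subsingleton
    cases h with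
    | zero =>
      obtain ⟨hex, hsurj⟩ := rightExact hd (exact_map_δ (J := I) hS 0) (δ_surjective hS (hE I 0))
        (powerTorsion_zero _) (powerTorsion_zero _)
      have hnat := (zeroι I).naturality S.g
      obtain ⟨e⟩ := LinearMap.nonempty_linearEquiv_of_exact hex hsurj (exact_map_δ (J := J) hS d)
        (δ_surjective hS (hE J d))
        (map_zeroι_bijective hIJ (fun q ↦ hE I q) d).2
        (map_zeroι_bijective hIJ (fun q ↦ hN _ q.succ_pos) d) (fun x ↦ by
          have := congrArg (localCohomology J d).map hnat
          rw [Functor.map_comp, Functor.map_comp] at this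
          exact congr($this x))
      exact ⟨e.toModuleIso⟩
    | succ h =>
      obtain ⟨e₁⟩ := nonempty_iso_of_subsingleton hS (hE I h) (hE I (h + 1))
      obtain ⟨e₂⟩ := nonempty_iso_of_subsingleton hS (hE J (d + h)) (hE J (d + h + 1))
      obtain ⟨e⟩ := ih S.X₃ hN
      exact ⟨(localCohomology J d).mapIso e₁.symm ≪≫ e ≪≫ e₂⟩

end localCohomology

end

/-- over a Noetherian local ring `R` of Krull dimension `n`, if
`cd(I) = ht(I) = h` then `H^{n-h}_m(H^h_I(R)) ≅ H^n_m(R)`. -/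
theorem localCohomology_maximalIdeal_localCohomology_iso_of_cd_eq_height
    (R : Type u) [CommRing R] [IsNoetherianRing R] [IsLocalRing R] (n h : ℕ)
    (hn : ringKrullDim R = (n : WithBot ℕ∞)) (I : Ideal R)
    (hh : idealHeight I = (h : ℕ∞))
    (hI : cohomologicalDimension I (ModuleCat.of R R) = (h : ℕ∞)) :
    Nonempty ((localCohomology (IsLocalRing.maximalIdeal R) (n - h)).obj
        ((localCohomology I h).obj (ModuleCat.of R R)) ≅
      (localCohomology (IsLocalRing.maximalIdeal R) n).obj (ModuleCat.of R R)) := by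
  have hdim := Ideal.ringKrullDim_quotient_add_le I (h := h) fun p hp ↦ hh ▸ iInf₂_le p hp
  have htop : I ≠ ⊤ := by
    rintro rfl
    refine ENat.natCast_ne_top h (hh ▸ top_le_iff.1 (le_iInf₂ fun p hp ↦ ?_))
    exact absurd (top_le_iff.1 hp) p.isPrime.ne_top
  have : Nontrivial (R ⧸ I) := Ideal.Quotient.nontrivial_iff.2 htop
  obtain ⟨d, hd, -⟩ := WithBot.coe_le_iff.1 (ringKrullDim_nonneg_of_nontrivial (R := R ⧸ I))
  rw [hd, hn, ← WithBot.coe_add] at hdim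
  replace hdim : d + h ≤ (n : ℕ∞) := WithBot.coe_le_coe.1 hdim
  lift d to ℕ using fun htop' ↦ by simp [htop'] at hdim
  have hle : d + h ≤ n := by exact_mod_cast hdim
  have hd' : ringKrullDim (R ⧸ I) ≤ (n - h : ℕ) := by
    rw [hd]
    exact WithBot.coe_le_coe.2 (Nat.cast_le.2 (Nat.le_sub_of_add_le hle))
  have hcd (q : ℕ) (hq : h < q) : Subsingleton ((localCohomology I q).obj (ModuleCat.of R R)) := by
    refine not_nontrivial_iff_subsingleton.1 fun hnt ↦ (Nat.cast_lt (α := ℕ∞).2 hq).not_ge ?_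
    rw [← hI]
    exact le_sSup ⟨q, rfl, hnt⟩
  have hiso := localCohomology.nonempty_iso_of_vanishes (IsLocalRing.le_maximalIdeal htop)
    (fun T _ _ hT ↦ localCohomology.Vanishes.maximalIdeal htop hd' hT (Nat.lt_succ_self _)) h
    (ModuleCat.of R R) hcd
  rwa [Nat.sub_add_cancel (Nat.le_of_add_left_le hle)] at hiso
end

section
/- Let (R, m) be a commutative Noetherian local ring that is not catenary, so that there exists a prime ideal p of R with ht(p) < dim(R) − dim(R/p). Then for any such prime ideal p, cd(p) > ht(p). -/
universe u

open CategoryTheory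

open Opposite

namespace PowExt

section ExtColimit

variable {R : Type u} [CommRing R]

/-- The `R`-module `R ⧸ I ^ t`, as a term of the inverse system defining local cohomology. -/
noncomputable abbrev quotPow (I : Ideal R) (t : ℕ) : ModuleCat.{u} R :=
  (localCohomology.ringModIdeals (localCohomology.idealPowersDiagram I)).obj (op t)

/-- The projection `R ⧸ I ^ s ⟶ R ⧸ I ^ t` for `t ≤ s`. -/
noncomputable abbrev quotPowMap (I : Ideal R) {t s : ℕ} (h : t ≤ s) :
    quotPow I s ⟶ quotPow I t :=
  (localCohomology.ringModIdeals (localCohomology.idealPowersDiagram I)).map (homOfLE h).op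

/-- The transition maps of the system `Ext^i (R ⧸ I ^ t, M)`. -/
noncomputable def extTransition (I : Ideal R) (i : ℕ) (M : ModuleCat.{u} R) (t s : ℕ) (h : t ≤ s) :
    Abelian.Ext.{u} (quotPow I t) M i →ₗ[R] Abelian.Ext.{u} (quotPow I s) M i :=
  (Abelian.Ext.mk₀ (quotPowMap I h)).precompOfLinear R M (zero_add i)

lemma extTransition_apply (I : Ideal R) (i : ℕ) (M : ModuleCat.{u} R) {t s : ℕ} (h : t ≤ s)
    (α : Abelian.Ext.{u} (quotPow I t) M i) :
    extTransition I i M t s h α = (Abelian.Ext.mk₀ (quotPowMap I h)).comp α (zero_add i) := rfl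

instance (I : Ideal R) (i : ℕ) (M : ModuleCat.{u} R) :
    DirectedSystem (fun t => Abelian.Ext.{u} (quotPow I t) M i)
      (fun t s h => extTransition I i M t s h) where
  map_self t α := by
    simp [extTransition_apply, quotPowMap]
  map_map t s r h h' α := by
    simp only [extTransition_apply, Abelian.Ext.mk₀_comp_mk₀_assoc, ← Functor.map_comp,
      ← op_comp, homOfLE_comp]

/-- The colimit of the modules `Ext^i (R ⧸ I ^ t, M)`. -/
abbrev LC (I : Ideal R) (i : ℕ) (M : Type u) [AddCommGroup M] [Module R M] : Type u :=
  Module.DirectLimit (fun t => Abelian.Ext.{u} (quotPow I t) (ModuleCat.of R M) i)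
    (fun t s h => extTransition I i (ModuleCat.of R M) t s h)

namespace LC

variable (I : Ideal R) (i : ℕ) {A B C : Type u} [AddCommGroup A] [Module R A]
  [AddCommGroup B] [Module R B] [AddCommGroup C] [Module R C]

/-- The canonical map from `Ext^i (R ⧸ I ^ t, M)` to the colimit. -/
noncomputable abbrev of (A : Type u) [AddCommGroup A] [Module R A] (t : ℕ) :
    Abelian.Ext.{u} (quotPow I t) (ModuleCat.of R A) i →ₗ[R] LC I i A :=
  Module.DirectLimit.of R ℕ (fun t => Abelian.Ext.{u} (quotPow I t) (ModuleCat.of R A) i)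
    (fun t s h => extTransition I i (ModuleCat.of R A) t s h) t

variable {I i}

lemma exists_of (z : LC I i A) : ∃ t α, of I i A t α = z :=
  Module.DirectLimit.exists_of z

lemma of_transition {t s : ℕ} (h : t ≤ s)
    (α : Abelian.Ext.{u} (quotPow I t) (ModuleCat.of R A) i) :
    of I i A s (extTransition I i (ModuleCat.of R A) t s h α) = of I i A t α :=
  Module.DirectLimit.of_f

lemma exists_of_of_eq_zero {t : ℕ} {α : Abelian.Ext.{u} (quotPow I t) (ModuleCat.of R A) i}
    (h : of I i A t α = 0) :
    ∃ s, ∃ hs : t ≤ s, extTransition I i (ModuleCat.of R A) t s hs α = 0 :=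
  Module.DirectLimit.of.zero_exact h

variable (I) in
/-- The map on colimits induced by Yoneda composition with an extension class. -/
noncomputable def postcomp {a i j : ℕ}
    (β : Abelian.Ext.{u} (ModuleCat.of R A) (ModuleCat.of R B) a) (h : i + a = j) :
    LC I i A →ₗ[R] LC I j B :=
  Module.DirectLimit.map (fun t => β.postcompOfLinear R (quotPow I t) h) (by
    intro t s hts
    ext α
    exact Abelian.Ext.comp_assoc _ _ _ (zero_add i) h (by lia))

lemma postcomp_of {a i j : ℕ}
    (β : Abelian.Ext.{u} (ModuleCat.of R A) (ModuleCat.of R B) a) (h : i + a = j)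
    (t : ℕ) (α : Abelian.Ext.{u} (quotPow I t) (ModuleCat.of R A) i) :
    postcomp I β h (of I i A t α) = of I j B t (α.comp β h) :=
  Module.DirectLimit.map_apply_of _ _ _

lemma transition_comp {a i j : ℕ}
    (β : Abelian.Ext.{u} (ModuleCat.of R A) (ModuleCat.of R B) a) (h : i + a = j)
    {t s : ℕ} (hs : t ≤ s) (α : Abelian.Ext.{u} (quotPow I t) (ModuleCat.of R A) i) :
    extTransition I j (ModuleCat.of R B) t s hs (α.comp β h) =
      (extTransition I i (ModuleCat.of R A) t s hs α).comp β h :=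
  (Abelian.Ext.comp_assoc _ _ _ (zero_add i) h (by lia)).symm

variable (I i) in
/-- The map on colimits induced by a linear map. -/
noncomputable def map (f : A →ₗ[R] B) : LC I i A →ₗ[R] LC I i B :=
  postcomp I (Abelian.Ext.mk₀ (ModuleCat.ofHom f)) (add_zero i)

lemma map_comp (f : A →ₗ[R] B) (g : B →ₗ[R] C) (z : LC I i A) :
    map I i (g ∘ₗ f) z = map I i g (map I i f z) := by
  obtain ⟨t, α, rfl⟩ := exists_of z
  simp only [map, postcomp_of, ModuleCat.ofHom_comp]
  rw [Abelian.Ext.comp_assoc_of_third_deg_zero, Abelian.Ext.mk₀_comp_mk₀]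

lemma map_smul_id (r : R) (z : LC I i A) :
    map I i (r • (LinearMap.id : A →ₗ[R] A)) z = r • z := by
  obtain ⟨t, α, rfl⟩ := exists_of z
  rw [map, postcomp_of, ← _root_.map_smul, Abelian.Ext.smul_eq_comp_mk₀]
  rfl

lemma map_zero' (z : LC I i A) : map I i (0 : A →ₗ[R] B) z = 0 := by
  obtain ⟨t, α, rfl⟩ := exists_of z
  have : ModuleCat.ofHom (0 : A →ₗ[R] B) = 0 := rfl
  rw [map, postcomp_of, this, Abelian.Ext.mk₀_zero, Abelian.Ext.comp_zero, _root_.map_zero]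

variable {f : A →ₗ[R] B} {g : B →ₗ[R] C}

lemma shortExact (hf : Function.Injective f) (hfg : Function.Exact f g)
    (hg : Function.Surjective g) :
    (ShortComplex.mk (ModuleCat.ofHom f) (ModuleCat.ofHom g)
      (by ext x; exact hfg.apply_apply_eq_zero x)).ShortExact where
  exact := (ShortComplex.ShortExact.moduleCat_exact_iff_function_exact _).2 hfg
  mono_f := (ModuleCat.mono_iff_injective _).2 hf
  epi_g := (ModuleCat.epi_iff_surjective _).2 hg

variable (I i) in
/-- The connecting homomorphism. -/
noncomputable def δ (hf : Function.Injective f) (hfg : Function.Exact f g)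
    (hg : Function.Surjective g) : LC I i C →ₗ[R] LC I (i + 1) A :=
  postcomp I (A := C) (B := A) (shortExact hf hfg hg).extClass rfl

lemma exact₂ (hf : Function.Injective f) (hfg : Function.Exact f g)
    (hg : Function.Surjective g) : Function.Exact (map I i f) (map I i g) := by
  intro z
  constructor
  · obtain ⟨t, α, rfl⟩ := exists_of z
    intro h
    rw [map, postcomp_of] at h
    obtain ⟨s, hs, h⟩ := exists_of_of_eq_zero h
    rw [transition_comp] at h
    obtain ⟨x, hx⟩ := Abelian.Ext.covariant_sequence_exact₂ _ (shortExact hf hfg hg) _ h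
    refine ⟨of I i A s x, ?_⟩
    rw [map, postcomp_of, ← of_transition hs α, ← hx]
  · rintro ⟨y, rfl⟩
    rw [← map_comp]
    have : g ∘ₗ f = 0 := hfg.linearMap_comp_eq_zero
    rw [this, map_zero']

lemma exact₃ (hf : Function.Injective f) (hfg : Function.Exact f g)
    (hg : Function.Surjective g) : Function.Exact (map I i g) (δ I i hf hfg hg) := by
  intro z
  constructor
  · obtain ⟨t, α, rfl⟩ := exists_of z
    intro h
    rw [δ, postcomp_of] at h
    obtain ⟨s, hs, h⟩ := exists_of_of_eq_zero h
    rw [transition_comp] at h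
    obtain ⟨x, hx⟩ := Abelian.Ext.covariant_sequence_exact₃ _ (shortExact hf hfg hg) _ rfl h
    refine ⟨of I i B s x, ?_⟩
    rw [map, postcomp_of, ← of_transition hs α, ← hx]
  · rintro ⟨y, rfl⟩
    obtain ⟨t, α, rfl⟩ := exists_of y
    rw [map, postcomp_of, δ, postcomp_of, Abelian.Ext.comp_assoc_of_second_deg_zero]
    erw [(shortExact hf hfg hg).comp_extClass]
    simp

lemma exact₁ (hf : Function.Injective f) (hfg : Function.Exact f g)
    (hg : Function.Surjective g) : Function.Exact (δ I i hf hfg hg) (map I (i + 1) f) := by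
  intro z
  constructor
  · obtain ⟨t, α, rfl⟩ := exists_of z
    intro h
    rw [map, postcomp_of] at h
    obtain ⟨s, hs, h⟩ := exists_of_of_eq_zero h
    rw [transition_comp] at h
    obtain ⟨x, hx⟩ := Abelian.Ext.covariant_sequence_exact₁ _ (shortExact hf hfg hg) _ h rfl
    refine ⟨of I i C s x, ?_⟩
    rw [δ, postcomp_of, ← of_transition hs α, ← hx]
  · rintro ⟨y, rfl⟩
    obtain ⟨t, α, rfl⟩ := exists_of y
    rw [map, δ, postcomp_of, postcomp_of, Abelian.Ext.comp_assoc_of_third_deg_zero]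
    erw [(shortExact hf hfg hg).extClass_comp]
    simp

lemma subsingleton_of_injective [Module.Injective R A] (i : ℕ) : Subsingleton (LC I (i + 1) A) := by
  have : CategoryTheory.Injective (ModuleCat.of R A) := Module.injective_object_of_injective_module ..
  refine subsingleton_of_forall_eq 0 fun z => ?_
  obtain ⟨t, α, rfl⟩ := exists_of z
  rw [Abelian.Ext.eq_zero_of_injective α, _root_.map_zero]

lemma exists_pow_smul_eq_zero (z : LC I i A) : ∃ t, ∀ r ∈ I ^ t, r • z = 0 := by
  obtain ⟨t, α, rfl⟩ := exists_of z
  refine ⟨t, fun r hr => ?_⟩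
  have h : r • 𝟙 (quotPow I t) = 0 := by
    ext x
    change r • x = 0
    obtain ⟨x, rfl⟩ := Ideal.Quotient.mk_surjective x
    exact (Ideal.Quotient.eq_zero_iff_mem.2 (Ideal.mul_mem_right _ _ hr) :
      Ideal.Quotient.mk (I ^ t) (r * x) = 0)
  have : r • α = 0 := by
    rw [← Abelian.Ext.mk₀_id_comp α, ← Abelian.Ext.smul_comp, ← Abelian.Ext.mk₀_smul, h]
    simp
  rw [← _root_.map_smul, this, _root_.map_zero]

end LC
end ExtColimit

section Torsion

variable {R : Type u} [CommRing R]

/-- The submodule of elements annihilated by a power of `I`. -/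
def tors (I : Ideal R) (A : Type*) [AddCommGroup A] [Module R A] : Submodule R A where
  carrier := {a | ∃ t, ∀ r ∈ I ^ t, r • a = 0}
  zero_mem' := ⟨0, by simp⟩
  add_mem' := by
    rintro a b ⟨t, ht⟩ ⟨s, hs⟩
    refine ⟨max t s, fun r hr => ?_⟩
    rw [smul_add, ht r (Ideal.pow_le_pow_right (le_max_left _ _) hr),
      hs r (Ideal.pow_le_pow_right (le_max_right _ _) hr), add_zero]
  smul_mem' := by
    rintro c a ⟨t, ht⟩
    exact ⟨t, fun r hr => by rw [smul_comm, ht r hr, smul_zero]⟩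

lemma map_mem_tors {I : Ideal R} {A B : Type*} [AddCommGroup A] [Module R A]
    [AddCommGroup B] [Module R B] (f : A →ₗ[R] B) {a : A} (ha : a ∈ tors I A) :
    f a ∈ tors I B := by
  obtain ⟨t, ht⟩ := ha
  exact ⟨t, fun r hr => by rw [← map_smul, ht r hr, map_zero]⟩

lemma mem_tors_of_map_mem {I : Ideal R} {A B : Type*} [AddCommGroup A] [Module R A]
    [AddCommGroup B] [Module R B] {f : A →ₗ[R] B} (hf : Function.Injective f) {a : A}
    (ha : f a ∈ tors I B) : a ∈ tors I A := by
  obtain ⟨t, ht⟩ := ha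
  exact ⟨t, fun r hr => hf (by rw [map_smul, ht r hr, map_zero])⟩

namespace LC

variable (I : Ideal R) {A B C : Type u} [AddCommGroup A] [Module R A]
  [AddCommGroup B] [Module R B] [AddCommGroup C] [Module R C]

/-- Evaluation at `1` of a homomorphism `R ⧸ I ^ t ⟶ A`. -/
noncomputable def evalOne (A : Type u) [AddCommGroup A] [Module R A] (t : ℕ) :
    Abelian.Ext.{u} (quotPow I t) (ModuleCat.of R A) 0 →ₗ[R] A where
  toFun α := (Abelian.Ext.addEquiv₀ α).hom (Ideal.Quotient.mk (I ^ t) 1)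
  map_add' α β := by rw [map_add]; rfl
  map_smul' r α := by
    change (Abelian.Ext.linearEquiv₀ (R := R) (r • α)).hom _ = _
    rw [map_smul]; rfl

lemma evalOne_mk₀ (t : ℕ) (f : quotPow I t ⟶ ModuleCat.of R A) :
    evalOne I A t (Abelian.Ext.mk₀ f) = f.hom (Ideal.Quotient.mk (I ^ t) 1) := by
  have : Abelian.Ext.addEquiv₀ (Abelian.Ext.mk₀ f) = f :=
    Abelian.Ext.addEquiv₀.right_inv f
  change (Abelian.Ext.addEquiv₀ (Abelian.Ext.mk₀ f)).hom _ = _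
  rw [this]

lemma evalOne_injective (t : ℕ) : Function.Injective (evalOne I A t) := by
  intro α β h
  refine Abelian.Ext.addEquiv₀.injective (ModuleCat.hom_ext (LinearMap.ext fun x => ?_))
  obtain ⟨x, rfl⟩ := Ideal.Quotient.mk_surjective x
  have hx : (Ideal.Quotient.mk (I ^ t) x : R ⧸ I ^ t) = x • Ideal.Quotient.mk (I ^ t) 1 := by
    rw [← Ideal.Quotient.mk_eq_mk, ← Ideal.Quotient.mk_eq_mk, ← Submodule.Quotient.mk_smul,
      smul_eq_mul, mul_one]
  have key (φ : quotPow I t ⟶ ModuleCat.of R A) :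
      φ.hom (Ideal.Quotient.mk (I ^ t) x) = x • φ.hom (Ideal.Quotient.mk (I ^ t) 1) :=
    (congrArg φ.hom hx).trans (map_smul φ.hom _ _)
  exact (key _).trans ((congrArg (x • ·) h).trans (key _).symm)

/-- Evaluation of a class in degree zero. -/
noncomputable def eval (A : Type u) [AddCommGroup A] [Module R A] : LC I 0 A →ₗ[R] A :=
  Module.DirectLimit.lift R ℕ _ _ (evalOne I A) (by
    intro t s h α
    obtain ⟨f, rfl⟩ := (Abelian.Ext.mk₀_bijective _ _).2 α
    rw [extTransition_apply, Abelian.Ext.mk₀_comp_mk₀, evalOne_mk₀, evalOne_mk₀]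
    rfl)

variable {I}

lemma eval_of (t : ℕ) (α : Abelian.Ext.{u} (quotPow I t) (ModuleCat.of R A) 0) :
    eval I A (of I 0 A t α) = evalOne I A t α :=
  Module.DirectLimit.lift_of _ _ _

lemma eval_injective : Function.Injective (eval I A) := by
  rw [injective_iff_map_eq_zero]
  intro z h
  obtain ⟨t, α, rfl⟩ := exists_of z
  rw [eval_of] at h
  rw [(injective_iff_map_eq_zero _).1 (evalOne_injective I t) _ h, map_zero]

lemma eval_mem_tors (z : LC I 0 A) : eval I A z ∈ tors I A := by
  obtain ⟨t, ht⟩ := exists_pow_smul_eq_zero z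
  exact ⟨t, fun r hr => by rw [← map_smul, ht r hr, map_zero]⟩

lemma exists_eval_eq {a : A} (ha : a ∈ tors I A) : ∃ z, eval I A z = a := by
  obtain ⟨t, ht⟩ := ha
  let f : (R ⧸ I ^ t) →ₗ[R] A := Submodule.liftQ (I ^ t) (LinearMap.toSpanSingleton R A a)
    (fun r hr => ht r hr)
  let f' : quotPow I t ⟶ ModuleCat.of R A := ModuleCat.ofHom f
  refine ⟨of I 0 A t (Abelian.Ext.mk₀ f'), ?_⟩
  rw [eval_of, evalOne_mk₀]
  exact one_smul R a

lemma eval_map (f : A →ₗ[R] B) (z : LC I 0 A) : eval I B (map I 0 f z) = f (eval I A z) := by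
  obtain ⟨t, α, rfl⟩ := exists_of z
  obtain ⟨g, rfl⟩ := (Abelian.Ext.mk₀_bijective _ _).2 α
  rw [map, postcomp_of, Abelian.Ext.mk₀_comp_mk₀, eval_of, eval_of, evalOne_mk₀, evalOne_mk₀]
  rfl

lemma map_surjective_iff {f : A →ₗ[R] B} :
    Function.Surjective (map I 0 f) ↔ ∀ b ∈ tors I B, ∃ a ∈ tors I A, f a = b := by
  constructor
  · intro h b hb
    obtain ⟨z, rfl⟩ := exists_eval_eq hb
    obtain ⟨y, rfl⟩ := h z
    exact ⟨_, eval_mem_tors y, (eval_map f y).symm⟩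
  · intro h z
    obtain ⟨a, ha, hab⟩ := h _ (eval_mem_tors z)
    obtain ⟨y, rfl⟩ := exists_eval_eq ha
    exact ⟨y, eval_injective ((eval_map f y).trans hab)⟩

variable {f : A →ₗ[R] B} {g : B →ₗ[R] C}

lemma subsingleton_one_iff [Module.Injective R B] (hf : Function.Injective f)
    (hfg : Function.Exact f g) (hg : Function.Surjective g) :
    Subsingleton (LC I 1 A) ↔ ∀ c ∈ tors I C, ∃ b ∈ tors I B, g b = c := by
  rw [← map_surjective_iff]
  constructor
  · intro _ z
    exact (exact₃ (I := I) (i := 0) hf hfg hg z).1 (Subsingleton.elim _ _)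
  · intro h
    refine subsingleton_of_forall_eq 0 fun z => ?_
    have := subsingleton_of_injective (I := I) (A := B) 0
    obtain ⟨y, rfl⟩ := (exact₁ (I := I) (i := 0) hf hfg hg z).1 (Subsingleton.elim _ _)
    exact (exact₃ (I := I) (i := 0) hf hfg hg y).2 (h y)

lemma subsingleton_add_two_iff [Module.Injective R B] (hf : Function.Injective f)
    (hfg : Function.Exact f g) (hg : Function.Surjective g) (i : ℕ) :
    Subsingleton (LC I (i + 2) A) ↔ Subsingleton (LC I (i + 1) C) := by
  have h1 := subsingleton_of_injective (I := I) (A := B) i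
  have h2 := subsingleton_of_injective (I := I) (A := B) (i + 1)
  constructor
  · intro _
    refine subsingleton_of_forall_eq 0 fun z => ?_
    obtain ⟨y, rfl⟩ := (exact₃ (I := I) (i := i + 1) hf hfg hg z).1 (Subsingleton.elim _ _)
    rw [Subsingleton.elim y 0, map_zero]
  · intro _
    refine subsingleton_of_forall_eq 0 fun z => ?_
    obtain ⟨y, rfl⟩ := (exact₁ (I := I) (i := i + 1) hf hfg hg z).1 (Subsingleton.elim _ _)
    rw [Subsingleton.elim y 0, map_zero]

end LC

/-- Every module embeds into an injective one. -/
lemma exists_injective_embedding (A : Type u) [AddCommGroup A] [Module R A] :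
    ∃ (E : Type u) (_ : AddCommGroup E) (_ : Module R E) (f : A →ₗ[R] E),
      Module.Injective R E ∧ Function.Injective f := by
  let J := CategoryTheory.Injective.under (ModuleCat.of R A)
  refine ⟨J, inferInstance, inferInstance, (CategoryTheory.Injective.ι (ModuleCat.of R A)).hom,
    ?_, ?_⟩
  · have : CategoryTheory.Injective (ModuleCat.of R J) :=
      inferInstanceAs (CategoryTheory.Injective J)
    exact Module.injective_module_of_injective_object R J
  · exact (ModuleCat.mono_iff_injective _).1 inferInstance

end Torsion

section Injective

variable {R : Type u} [CommRing R]

lemma exists_pow_le_annihilator {M : Type*} [AddCommGroup M] [Module R M] [Module.Finite R M]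
    {I : Ideal R} (h : ∀ a : M, a ∈ tors I M) : ∃ k, ∀ r ∈ I ^ k, ∀ a : M, r • a = 0 := by
  obtain ⟨S, hS⟩ := Module.Finite.fg_top (R := R) (M := M)
  choose t ht using h
  refine ⟨S.sup t, fun r hr a => ?_⟩
  have ha : a ∈ Submodule.span R (S : Set M) := hS ▸ Submodule.mem_top
  induction ha using Submodule.span_induction with
  | mem x hx => exact ht x r (Ideal.pow_le_pow_right (Finset.le_sup hx) hr)
  | zero => exact smul_zero _
  | add x y _ _ hx hy => rw [smul_add, hx, hy, add_zero]
  | smul c x _ hx => rw [smul_comm, hx, smul_zero]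

lemma tors_tors (I : Ideal R) {A : Type*} [AddCommGroup A] [Module R A] (a : tors I A) :
    a ∈ tors I (tors I A) :=
  mem_tors_of_map_mem (f := (tors I A).subtype) Subtype.val_injective a.2

/-- Over a Noetherian ring, the `I`-power torsion of an injective module is injective. -/
lemma injective_tors [IsNoetherianRing R] (I : Ideal R) (E : Type u) [AddCommGroup E] [Module R E]
    [Module.Injective R E] : Module.Injective R (tors I E) := by
  refine Module.Baer.injective fun J f => ?_
  have hfJ : ∃ k, ∀ r ∈ I ^ k, ∀ a : LinearMap.range f, r • a = 0 :=
    exists_pow_le_annihilator fun a =>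
      mem_tors_of_map_mem (f := (LinearMap.range f).subtype) Subtype.val_injective (tors_tors I _)
  obtain ⟨k, hk⟩ := hfJ
  obtain ⟨c, hc⟩ := I.exists_pow_inf_eq_pow_smul J
  have hn : I ^ (c + k) ⊓ J ≤ I ^ k • J := by
    have := hc (c + k) (Nat.le_add_right _ _)
    rw [Nat.add_sub_cancel_left, smul_eq_mul, Ideal.mul_top] at this
    rw [this]
    exact Submodule.smul_mono le_rfl inf_le_right
  have hzero : ∀ x ∈ I ^ k • J, ∃ hx : x ∈ J, f ⟨x, hx⟩ = 0 := by
    intro x hx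
    induction hx using Submodule.smul_induction_on' with
    | smul r hr y hy =>
      refine ⟨J.smul_mem r hy, ?_⟩
      have h1 := hk r hr ⟨f ⟨y, hy⟩, LinearMap.mem_range_self _ _⟩
      have h2 : r • f ⟨y, hy⟩ = 0 := congrArg Subtype.val h1
      rw [← map_smul] at h2
      exact h2
    | add x _ y _ hx hy =>
      obtain ⟨hx, hfx⟩ := hx
      obtain ⟨hy, hfy⟩ := hy
      refine ⟨J.add_mem hx hy, ?_⟩
      have := map_add f ⟨x, hx⟩ ⟨y, hy⟩
      rw [hfx, hfy, add_zero] at this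
      exact this
  let K : Submodule R J := Submodule.comap J.subtype (I ^ (c + k))
  let φ : (J ⧸ K) →ₗ[R] (R ⧸ I ^ (c + k)) := Submodule.mapQ K (I ^ (c + k)) J.subtype le_rfl
  have hφ : Function.Injective φ := by
    rw [← LinearMap.ker_eq_bot, Submodule.ker_mapQ]
    exact Submodule.mkQ_map_self K
  let ψ : (J ⧸ K) →ₗ[R] E := K.liftQ ((tors I E).subtype ∘ₗ f) (by
    rintro ⟨x, hx⟩ hxK
    obtain ⟨_, h⟩ := hzero x (hn ⟨hxK, hx⟩)
    exact congrArg Subtype.val h)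
  obtain ⟨g, hg⟩ := Module.Injective.out φ hφ ψ
  have hmem : ∀ x : R, (g ∘ₗ (I ^ (c + k)).mkQ) x ∈ tors I E := by
    intro x
    refine ⟨c + k, fun r hr => ?_⟩
    rw [← map_smul]
    have : (I ^ (c + k)).mkQ (r • x) = 0 :=
      (Submodule.Quotient.mk_eq_zero _).2 (Ideal.mul_mem_right _ _ hr)
    rw [LinearMap.comp_apply, this, map_zero]
  refine ⟨LinearMap.codRestrict _ (g ∘ₗ (I ^ (c + k)).mkQ) hmem, fun x hx => Subtype.ext ?_⟩
  exact hg (K.mkQ ⟨x, hx⟩)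

lemma exists_injective_embedding_of_tors [IsNoetherianRing R] {I : Ideal R} (N : Type u)
    [AddCommGroup N] [Module R N] (h : ∀ a : N, a ∈ tors I N) :
    ∃ (E : Type u) (_ : AddCommGroup E) (_ : Module R E) (f : N →ₗ[R] E),
      Module.Injective R E ∧ Function.Injective f ∧ ∀ b : E, b ∈ tors I E := by
  obtain ⟨E, _, _, f, _, hf⟩ := exists_injective_embedding (R := R) N
  exact ⟨tors I E, inferInstance, inferInstance, f.codRestrict _ fun a => map_mem_tors f (h a),
    injective_tors I E, fun a b hab => hf (congrArg Subtype.val hab), tors_tors I⟩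

/-- Torsion modules have no local cohomology in positive degrees. -/
lemma LC.subsingleton_of_tors [IsNoetherianRing R] {I : Ideal R} (i : ℕ) (N : Type u)
    [AddCommGroup N] [Module R N] (h : ∀ a : N, a ∈ tors I N) :
    Subsingleton (LC I (i + 1) N) := by
  induction i generalizing N with
  | zero =>
    obtain ⟨E, _, _, f, _, hf, hE⟩ := exists_injective_embedding_of_tors N h
    have hg := Submodule.mkQ_surjective (LinearMap.range f)
    rw [LC.subsingleton_one_iff hf (LinearMap.exact_map_mkQ_range f) hg]
    intro c _
    obtain ⟨b, rfl⟩ := hg c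
    exact ⟨b, hE b, rfl⟩
  | succ i ih =>
    obtain ⟨E, _, _, f, _, hf, hE⟩ := exists_injective_embedding_of_tors N h
    have hg := Submodule.mkQ_surjective (LinearMap.range f)
    rw [LC.subsingleton_add_two_iff hf (LinearMap.exact_map_mkQ_range f) hg]
    refine ih _ fun c => ?_
    obtain ⟨b, rfl⟩ := hg c
    exact map_mem_tors _ (hE b)

/-- Divisibility up to torsion in injective modules over a Noetherian ring. -/
lemma exists_pow_smul_eq_pow_smul [IsNoetherianRing R] (J : Type u) [AddCommGroup J] [Module R J]
    [Module.Injective R J] (x : R) (k : ℕ) (w : J) :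
    ∃ (w' : J) (l : ℕ), x ^ (k + l) • w' = x ^ l • w := by
  let a : ℕ →o Ideal R := ⟨fun l => LinearMap.ker (LinearMap.toSpanSingleton R R (x ^ l)), by
    intro l m hlm r hr
    simp only [LinearMap.mem_ker, LinearMap.toSpanSingleton_apply, smul_eq_mul] at hr ⊢
    rw [← Nat.sub_add_cancel hlm, pow_add, mul_left_comm, hr, mul_zero]⟩
  obtain ⟨l, hl⟩ := monotone_stabilizes_iff_noetherian.2 ‹_› a
  let s := LinearMap.toSpanSingleton R R (x ^ (k + l))
  have hker : LinearMap.ker s ≤ LinearMap.ker (LinearMap.toSpanSingleton R J (x ^ l • w)) := by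
    intro r hr
    have hr' : r ∈ a (k + l) := hr
    rw [← hl (k + l) (Nat.le_add_left _ _)] at hr'
    have : r * x ^ l = 0 := hr'
    rw [LinearMap.mem_ker, LinearMap.toSpanSingleton_apply, smul_smul, this, zero_smul]
  let φ : (R ⧸ LinearMap.ker s) →ₗ[R] R := (LinearMap.ker s).liftQ s le_rfl
  have hφ : Function.Injective φ := LinearMap.ker_eq_bot.1 (Submodule.ker_liftQ_eq_bot' _ s rfl)
  obtain ⟨g, hg⟩ := Module.Injective.out φ hφ ((LinearMap.ker s).liftQ _ hker)
  refine ⟨g 1, l, ?_⟩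
  have := hg ((LinearMap.ker s).mkQ 1)
  have h1 : φ ((LinearMap.ker s).mkQ 1) = x ^ (k + l) • (1 : R) := by
    change (1 : R) • x ^ (k + l) = _
    rw [smul_eq_mul, smul_eq_mul, mul_comm]
  rw [h1, map_smul] at this
  rw [this]
  exact one_smul R _

end Injective

section AddGenerator

variable {R : Type u} [CommRing R]

lemma mem_tors_sup_span {I : Ideal R} {x : R} {A : Type*} [AddCommGroup A] [Module R A] {a : A} :
    a ∈ tors (I ⊔ Ideal.span {x}) A ↔ a ∈ tors I A ∧ ∃ k, x ^ k • a = 0 := by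
  constructor
  · rintro ⟨t, ht⟩
    refine ⟨⟨t, fun r hr => ht r (Ideal.pow_right_mono le_sup_left t hr)⟩, t, ht _ ?_⟩
    exact Ideal.pow_mem_pow (Ideal.mem_sup_right (Ideal.mem_span_singleton_self x)) t
  · rintro ⟨⟨t, ht⟩, k, hk⟩
    refine ⟨t + k, fun r hr => ?_⟩
    have hr' := Ideal.sup_pow_add_le_pow_sup_pow hr
    obtain ⟨y, hy, z, hz, rfl⟩ := Submodule.mem_sup.1 hr'
    rw [Ideal.span_singleton_pow, Ideal.mem_span_singleton'] at hz
    obtain ⟨c, rfl⟩ := hz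
    rw [add_smul, ht y hy, mul_smul, hk, smul_zero, add_zero]

lemma LC.subsingleton_congr {I J : Ideal R}
    (h : ∀ (A : Type u) [AddCommGroup A] [Module R A], tors I A = tors J A) (i : ℕ)
    (M : Type u) [AddCommGroup M] [Module R M] :
    Subsingleton (LC I (i + 1) M) ↔ Subsingleton (LC J (i + 1) M) := by
  induction i generalizing M with
  | zero =>
    obtain ⟨E, _, _, f, _, hf⟩ := exists_injective_embedding (R := R) M
    have hg := Submodule.mkQ_surjective (LinearMap.range f)
    rw [LC.subsingleton_one_iff hf (LinearMap.exact_map_mkQ_range f) hg,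
      LC.subsingleton_one_iff hf (LinearMap.exact_map_mkQ_range f) hg, h, h]
  | succ i ih =>
    obtain ⟨E, _, _, f, _, hf⟩ := exists_injective_embedding (R := R) M
    have hg := Submodule.mkQ_surjective (LinearMap.range f)
    rw [LC.subsingleton_add_two_iff hf (LinearMap.exact_map_mkQ_range f) hg,
      LC.subsingleton_add_two_iff hf (LinearMap.exact_map_mkQ_range f) hg, ih]

lemma LC.subsingleton_sup_span [IsNoetherianRing R] {I : Ideal R} (x : R) (i : ℕ)
    (M : Type u) [AddCommGroup M] [Module R M] (h1 : Subsingleton (LC I (i + 1) M))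
    (h2 : Subsingleton (LC I (i + 2) M)) :
    Subsingleton (LC (I ⊔ Ideal.span {x}) (i + 2) M) := by
  induction i generalizing M with
  | succ i ih =>
    obtain ⟨E, _, _, f, _, hf⟩ := exists_injective_embedding (R := R) M
    have hg := Submodule.mkQ_surjective (LinearMap.range f)
    rw [LC.subsingleton_add_two_iff hf (LinearMap.exact_map_mkQ_range f) hg] at h1 h2 ⊢
    exact ih _ h1 h2
  | zero =>
    obtain ⟨E, _, _, f, _, hf⟩ := exists_injective_embedding (R := R) M
    have hg := Submodule.mkQ_surjective (LinearMap.range f)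
    rw [LC.subsingleton_one_iff hf (LinearMap.exact_map_mkQ_range f) hg] at h1
    rw [LC.subsingleton_add_two_iff hf (LinearMap.exact_map_mkQ_range f) hg] at h2 ⊢
    obtain ⟨E', _, _, f', _, hf'⟩ := exists_injective_embedding (R := R) (E ⧸ LinearMap.range f)
    have hg' := Submodule.mkQ_surjective (LinearMap.range f')
    have hfg' := LinearMap.exact_map_mkQ_range f'
    rw [LC.subsingleton_one_iff hf' hfg' hg'] at h2 ⊢
    intro z hz
    obtain ⟨hzI, k, hk⟩ := mem_tors_sup_span.1 hz
    obtain ⟨y, hy, rfl⟩ := h2 z hzI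
    rw [← map_smul] at hk
    obtain ⟨v, hv⟩ := (hfg' _).1 hk
    have hvI : v ∈ tors I _ := mem_tors_of_map_mem hf' (hv ▸ (tors I E').smul_mem _ hy)
    obtain ⟨w, hw, rfl⟩ := h1 v hvI
    have := injective_tors I E
    obtain ⟨w', l, hwl⟩ := exists_pow_smul_eq_pow_smul (tors I E) x k ⟨w, hw⟩
    have hwl' : x ^ (k + l) • (w' : E) = x ^ l • w := congrArg Subtype.val hwl
    let d := f' ∘ₗ (LinearMap.range f).mkQ
    refine ⟨y - d w', mem_tors_sup_span.2
      ⟨(tors I E').sub_mem hy (map_mem_tors d w'.2), k + l, ?_⟩, ?_⟩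
    · have h3 : d w = x ^ k • y := hv
      rw [smul_sub, ← map_smul, hwl', map_smul, h3, smul_smul, ← pow_add, add_comm, sub_self]
    · rw [map_sub, sub_eq_self]
      exact hfg'.apply_apply_eq_zero _

lemma LC.subsingleton_sup_span_finset [IsNoetherianRing R] {I : Ideal R} (S : Finset R) {c : ℕ}
    (M : Type u) [AddCommGroup M] [Module R M] (h : ∀ i, c < i → Subsingleton (LC I i M)) :
    ∀ i, c + S.card < i → Subsingleton (LC (I ⊔ Ideal.span (S : Set R)) i M) := by
  classical
  induction S using Finset.induction_on with
  | empty => simpa using h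
  | insert x S hx ih =>
    intro i hi
    rw [Finset.card_insert_of_notMem hx] at hi
    obtain ⟨j, rfl⟩ : ∃ j, i = j + 2 := ⟨i - 2, by lia⟩
    rw [Finset.coe_insert, Ideal.span_insert, sup_comm (Ideal.span {x}), ← sup_assoc]
    exact LC.subsingleton_sup_span x j M (ih _ (by lia)) (ih _ (by lia))

lemma tors_congr {I J : Ideal R} {k l : ℕ} (hIJ : I ^ k ≤ J) (hJI : J ^ l ≤ I)
    (A : Type*) [AddCommGroup A] [Module R A] : tors I A = tors J A := by
  ext a
  constructor
  · rintro ⟨t, ht⟩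
    exact ⟨l * t, fun r hr => ht r (Ideal.pow_right_mono hJI t (pow_mul J l t ▸ hr))⟩
  · rintro ⟨t, ht⟩
    exact ⟨k * t, fun r hr => ht r (Ideal.pow_right_mono hIJ t (pow_mul I k t ▸ hr))⟩

end AddGenerator

section Comparison

open Limits

variable {R : Type u} [CommRing R]

section Homology

variable {D : Type*} [Category* D] [Abelian D] {K L : ChainComplex D ℕ}

/-- The morphism out of the homology in degree `n` induced by a cocycle `K.X n ⟶ A`. -/
noncomputable def fromHomology (K : ChainComplex D ℕ) {A : D} (n : ℕ) (k : K.X n ⟶ A)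
    (hk : K.d (n + 1) n ≫ k = 0) : K.homology n ⟶ A :=
  K.homologyι n ≫ K.descOpcycles k (n + 1) (by simp) hk

lemma homologyMap_fromHomology (φ : K ⟶ L) {A : D} (n : ℕ) (k : L.X n ⟶ A)
    (hk : L.d (n + 1) n ≫ k = 0) :
    HomologicalComplex.homologyMap φ n ≫ fromHomology L n k hk =
      fromHomology K n (φ.f n ≫ k) (by rw [← φ.comm_assoc, hk, comp_zero]) := by
  rw [fromHomology, fromHomology, HomologicalComplex.homologyι_naturality_assoc,
    HomologicalComplex.opcyclesMap_comp_descOpcycles]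

lemma exists_eq_of_fromHomology_eq_zero {A : D} [Injective A] (n : ℕ) (k : K.X (n + 1) ⟶ A)
    (hk : K.d (n + 2) (n + 1) ≫ k = 0) (h : fromHomology K (n + 1) k hk = 0) :
    ∃ l : K.X n ⟶ A, K.d (n + 1) n ≫ l = k := by
  let S := ShortComplex.mk _ _ (K.homologyι_comp_fromOpcycles (n + 1) n)
  have hS : S.Exact := S.exact_of_f_is_kernel (K.homologyIsKernel (n + 1) n (by simp))
  refine ⟨hS.descToInjective _ h, ?_⟩
  rw [← K.p_fromOpcycles]
  have := hS.comp_descToInjective _ h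
  dsimp [S] at this
  rw [Category.assoc, this, HomologicalComplex.p_descOpcycles]

variable {C : Type*} [Category* C] [Abelian C] [EnoughProjectives C] {X X' : C}

/-- The morphism out of a left derived functor induced by a cocycle on a projective resolution. -/
noncomputable def fromLeftDerived (F : C ⥤ D) [F.Additive] (P : ProjectiveResolution X) (n : ℕ)
    {A : D} (k : F.obj (P.complex.X n) ⟶ A) (hk : F.map (P.complex.d (n + 1) n) ≫ k = 0) :
    (F.leftDerived n).obj X ⟶ A :=
  (P.isoLeftDerivedObj F n).hom ≫
    fromHomology ((F.mapHomologicalComplex _).obj P.complex) n k hk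

lemma leftDerived_map_fromLeftDerived (F : C ⥤ D) [F.Additive] (P : ProjectiveResolution X)
    (P' : ProjectiveResolution X') {g : X' ⟶ X} (φ : ProjectiveResolution.Hom P' P g) (n : ℕ)
    {A : D} (k : F.obj (P.complex.X n) ⟶ A) (hk : F.map (P.complex.d (n + 1) n) ≫ k = 0) :
    (F.leftDerived n).map g ≫ fromLeftDerived F P n k hk =
      fromLeftDerived F P' n (F.map (φ.hom.f n) ≫ k)
        (by rw [← F.map_comp_assoc, ← φ.hom.comm, F.map_comp_assoc, hk, comp_zero]) := by
  have h := ProjectiveResolution.isoLeftDerivedObj_hom_naturality g P' P φ.hom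
    (by simpa using! φ.hom_f_zero_comp_π_f_zero) F n
  refine (reassoc_of% h) (fromHomology ((F.mapHomologicalComplex _).obj P.complex) n k hk)
    |>.trans ?_
  exact congrArg (_ ≫ ·) (homologyMap_fromHomology _ n _ hk)

lemma exists_eq_of_fromLeftDerived_eq_zero (F : C ⥤ D) [F.Additive] (P : ProjectiveResolution X)
    (n : ℕ) {A : D} [Injective A] (k : F.obj (P.complex.X (n + 1)) ⟶ A)
    (hk : F.map (P.complex.d (n + 2) (n + 1)) ≫ k = 0)
    (h : fromLeftDerived F P (n + 1) k hk = 0) :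
    ∃ l : F.obj (P.complex.X n) ⟶ A, F.map (P.complex.d (n + 1) n) ≫ l = k := by
  refine exists_eq_of_fromHomology_eq_zero (K := (F.mapHomologicalComplex _).obj P.complex) n k hk
    ?_
  exact (cancel_epi (P.isoLeftDerivedObj F (n + 1)).hom).1 (h.trans comp_zero.symm)

end Homology

variable {X X' Y : ModuleCat.{u} R}

/-- A cochain `P.complex.X n ⟶ Y`, seen as a morphism in the opposite category of modules. -/
noncomputable def cochainOp {Z Y : ModuleCat.{u} R} (f : Z ⟶ Y) :
    ((linearYoneda R (ModuleCat.{u} R)).obj Y).rightOp.obj Z ⟶ op (ModuleCat.of R R) :=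
  Quiver.Hom.op (ModuleCat.ofHom (LinearMap.toSpanSingleton R (Z ⟶ Y) f))

lemma map_cochainOp {Z Z' Y : ModuleCat.{u} R} (g : Z' ⟶ Z) (f : Z ⟶ Y) :
    ((linearYoneda R (ModuleCat.{u} R)).obj Y).rightOp.map g ≫ cochainOp f =
      cochainOp (g ≫ f) := by
  apply Quiver.Hom.unop_inj
  ext : 1
  refine LinearMap.ext_ring ?_
  change g ≫ ((1 : R) • f) = (1 : R) • (g ≫ f)
  simp

lemma exists_cochainOp_eq {Z Y : ModuleCat.{u} R}
    (k : ((linearYoneda R (ModuleCat.{u} R)).obj Y).rightOp.obj Z ⟶ op (ModuleCat.of R R)) :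
    ∃ f : Z ⟶ Y, cochainOp f = k := by
  refine ⟨k.unop.hom (1 : R), ?_⟩
  apply Quiver.Hom.unop_inj
  ext : 1
  refine LinearMap.ext_ring ?_
  exact one_smul R _

lemma cochainOp_injective {Z Y : ModuleCat.{u} R} :
    Function.Injective (cochainOp : (Z ⟶ Y) → _) := by
  intro f g h
  have h2 : (cochainOp f).unop.hom (1 : R) = (cochainOp g).unop.hom (1 : R) := by rw [h]
  exact (one_smul R f).symm.trans (h2.trans (one_smul R g))

lemma cochainOp_zero {Z Y : ModuleCat.{u} R} : cochainOp (0 : Z ⟶ Y) = 0 := by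
  apply Quiver.Hom.unop_inj
  ext : 1
  refine LinearMap.ext_ring ?_
  exact one_smul R _

lemma map_d_cochainOp (P : ProjectiveResolution X) {n m : ℕ} (f : P.complex.X n ⟶ Y)
    (hf : P.complex.d m n ≫ f = 0) :
    ((linearYoneda R (ModuleCat.{u} R)).obj Y).rightOp.map (P.complex.d m n) ≫ cochainOp f = 0 := by
  rw [map_cochainOp, hf, cochainOp_zero]

/-- The class in `Ext R (ModuleCat R) n` of a cocycle. -/
noncomputable def derivedMk (P : ProjectiveResolution X) (n : ℕ) (f : P.complex.X n ⟶ Y)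
    (hf : P.complex.d (n + 1) n ≫ f = 0) :
    ModuleCat.of R R ⟶ ((Ext R (ModuleCat.{u} R) n).obj (op X)).obj Y :=
  Quiver.Hom.unop (fromLeftDerived ((linearYoneda R (ModuleCat.{u} R)).obj Y).rightOp P n
    (cochainOp f) (map_d_cochainOp P f hf))

lemma derivedMk_comp (P : ProjectiveResolution X) (P' : ProjectiveResolution X') {g : X' ⟶ X}
    (φ : ProjectiveResolution.Hom P' P g) (n : ℕ)
    (f : P.complex.X n ⟶ Y) (hf : P.complex.d (n + 1) n ≫ f = 0) :
    derivedMk P n f hf ≫ ((Ext R (ModuleCat.{u} R) n).map g.op).app Y =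
      derivedMk P' n (φ.hom.f n ≫ f) (by simp [← φ.hom.comm_assoc, hf]) := by
  apply Quiver.Hom.op_inj
  refine (leftDerived_map_fromLeftDerived
    ((linearYoneda R (ModuleCat.{u} R)).obj Y).rightOp P P' φ n (cochainOp f)
    (map_d_cochainOp P f hf)).trans ?_
  change _ = fromLeftDerived ((linearYoneda R (ModuleCat.{u} R)).obj Y).rightOp P' n
    (cochainOp (φ.hom.f n ≫ f)) _
  congr 1

lemma exists_of_derivedMk_eq_zero (P : ProjectiveResolution X) (n : ℕ)
    (f : P.complex.X (n + 1) ⟶ Y) (hf : P.complex.d (n + 2) (n + 1) ≫ f = 0)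
    (h : derivedMk P (n + 1) f hf = 0) :
    ∃ g : P.complex.X n ⟶ Y, P.complex.d (n + 1) n ≫ g = f := by
  have h' := congrArg Quiver.Hom.op h
  obtain ⟨l, hl⟩ := exists_eq_of_fromLeftDerived_eq_zero _ _ _ _ (map_d_cochainOp P f hf) h'
  obtain ⟨g, rfl⟩ := exists_cochainOp_eq l
  refine ⟨g, cochainOp_injective ?_⟩
  rw [← hl, ← map_cochainOp]

lemma LC.subsingleton_of_localCohomology (I : Ideal R) (i : ℕ) (M : Type u) [AddCommGroup M]
    [Module R M] (h : Subsingleton ((localCohomology I (i + 1)).obj (ModuleCat.of R M))) :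
    Subsingleton (LC I (i + 1) M) := by
  refine subsingleton_of_forall_eq 0 fun z => ?_
  obtain ⟨t, α, rfl⟩ := LC.exists_of z
  let P := projectiveResolution (quotPow I t)
  obtain ⟨f, hf, rfl⟩ := P.extMk_surjective α (i + 2) rfl
  have := localCohomology.hasColimitDiagram.{u, 0} (localCohomology.idealPowersDiagram I) (i + 1)
  let D := localCohomology.diagram (localCohomology.idealPowersDiagram I) (i + 1)
  let hD := isColimitOfPreserves ((evaluation _ _).obj (ModuleCat.of R M)) (colimit.isColimit D)
  have : IsFiltered ℕᵒᵖᵒᵖ := inferInstance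
  have : PreservesFilteredColimitsOfSize.{0, 0} (forget (ModuleCat.{u} R)) :=
    preservesFilteredColimitsOfSize_shrink.{0, u, 0, u} _
  let x := (derivedMk P (i + 1) f hf).hom (1 : R)
  obtain ⟨k, a, b, hab⟩ := Concrete.isColimit_exists_of_rep_eq
    (D ⋙ (evaluation _ _).obj (ModuleCat.of R M)) hD (i := op (op t)) (j := op (op t)) x 0
      (Subsingleton.elim (α := (localCohomology I (i + 1)).obj (ModuleCat.of R M)) _ _)
  obtain ⟨⟨s⟩⟩ := k
  have hts : t ≤ s := leOfHom a.unop.unop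
  let P' := projectiveResolution (quotPow I s)
  let φ : ProjectiveResolution.Hom P' P (quotPowMap I hts) :=
    { hom := ProjectiveResolution.lift _ _ _
      hom_f_zero_comp_π_f_zero := by
        simpa using! ProjectiveResolution.lift_commutes_zero (quotPowMap I hts) P' P }
  rw [← LC.of_transition hts, extTransition_apply, ProjectiveResolution.mk₀_comp_extMk _ _ _ _ φ,
    (ProjectiveResolution.extMk_eq_zero_iff _ _ _ _ _ i rfl).2, map_zero]
  refine exists_of_derivedMk_eq_zero P' i _ (by rw [← φ.hom.comm_assoc, hf, comp_zero]) ?_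
  rw [← derivedMk_comp P P' φ]
  ext : 1
  refine LinearMap.ext_ring ?_
  exact hab.trans (map_zero _)

end Comparison

section Local

variable {R : Type u} [CommRing R]

lemma LC.subsingleton_of_subsingleton (I : Ideal R) (i : ℕ) (M : Type u) [AddCommGroup M]
    [Module R M] [Subsingleton M] : Subsingleton (LC I i M) := by
  refine subsingleton_of_forall_eq 0 fun z => ?_
  have h : (0 : M →ₗ[R] M) = (1 : R) • LinearMap.id := Subsingleton.elim _ _
  rw [← one_smul R z, ← LC.map_smul_id, ← h, LC.map_zero']

lemma tors_quotient_tors [IsNoetherianRing R] (I : Ideal R) (M : Type*) [AddCommGroup M]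
    [Module R M] [Module.Finite R M] : tors I (M ⧸ tors I M) = ⊥ := by
  obtain ⟨k, hk⟩ := exists_pow_le_annihilator (I := I) (M := tors I M) (tors_tors I)
  rw [eq_bot_iff]
  intro y hy
  obtain ⟨z, rfl⟩ := Submodule.Quotient.mk_surjective _ y
  obtain ⟨t, ht⟩ := hy
  rw [Submodule.mem_bot, Submodule.Quotient.mk_eq_zero]
  refine ⟨k + t, fun r hr => ?_⟩
  rw [pow_add] at hr
  refine Submodule.smul_induction_on (p := fun r => r • z = 0) hr (fun a ha b hb => ?_)
    fun a b ha hb => by rw [add_smul, ha, hb, add_zero]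
  have hb' := ht b hb
  rw [← Submodule.Quotient.mk_smul, Submodule.Quotient.mk_eq_zero] at hb'
  rw [smul_eq_mul, mul_smul]
  simpa using congrArg Subtype.val (hk a ha ⟨_, hb'⟩)

lemma LC.map_mkQ_tors_injective [IsNoetherianRing R] (I : Ideal R) (i : ℕ) (M : Type u)
    [AddCommGroup M] [Module R M] :
    Function.Injective (LC.map I (i + 1) (tors I M).mkQ) := by
  rw [injective_iff_map_eq_zero]
  intro z hz
  have hs := LC.subsingleton_of_tors (I := I) i (tors I M) (tors_tors I)
  obtain ⟨w, rfl⟩ := (LC.exact₂ (I := I) (i := i + 1) (tors I M).injective_subtype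
    (LinearMap.exact_subtype_mkQ _) (tors I M).mkQ_surjective z).1 hz
  rw [Subsingleton.elim w 0, map_zero]

open scoped Pointwise in
lemma exact_lsmul_mkQ (x : R) (M : Type*) [AddCommGroup M] [Module R M] :
    Function.Exact (x • LinearMap.id : M →ₗ[R] M) (x • (⊤ : Submodule R M)).mkQ := by
  intro y
  rw [Submodule.mkQ_apply, Submodule.Quotient.mk_eq_zero, Submodule.mem_smul_pointwise_iff_exists]
  simp

open scoped Pointwise in
lemma exact_range_subtype_mkQ (s : R) (M : Type*) [AddCommGroup M] [Module R M] :
    Function.Exact (LinearMap.range (s • LinearMap.id : M →ₗ[R] M)).subtype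
      (s • (⊤ : Submodule R M)).mkQ := by
  intro y
  rw [exact_lsmul_mkQ s M y]
  simp

lemma smul_quotSMulTop_eq_zero {M : Type*} [AddCommGroup M] [Module R M] (s : R)
    (y : QuotSMulTop s M) : s • y = 0 := by
  obtain ⟨a, rfl⟩ := Submodule.Quotient.mk_surjective _ y
  exact (exact_lsmul_mkQ s M _).2 ⟨a, rfl⟩

lemma exists_surjective_quotSMulTop {A B : Type*} [AddCommGroup A] [Module R A] [AddCommGroup B]
    [Module R B] {f : A →ₗ[R] B} (hf : Function.Surjective f) {s : R} (h : ∀ b : B, s • b = 0) :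
    ∃ g : QuotSMulTop s A →ₗ[R] B, Function.Surjective g := by
  refine ⟨Submodule.liftQ _ f fun y hy => ?_, fun b => ?_⟩
  · obtain ⟨a, rfl⟩ := (exact_lsmul_mkQ s A y).1 ((Submodule.Quotient.mk_eq_zero _).2 hy)
    simp [h]
  · obtain ⟨a, rfl⟩ := hf b
    exact ⟨Submodule.Quotient.mk a, rfl⟩

variable [IsNoetherianRing R] [IsLocalRing R]

open IsLocalRing

lemma exists_isSMulRegular {N : Type*} [AddCommGroup N] [Module R N] [Module.Finite R N]
    (h : tors (maximalIdeal R) N = ⊥) : ∃ x ∈ maximalIdeal R, IsSMulRegular N x := by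
  by_contra! hc
  obtain ⟨P, hP, hle⟩ : ∃ P ∈ associatedPrimes R N, maximalIdeal R ≤ P :=
    ((maximalIdeal R).subset_union_prime_finite (associatedPrimes.finite R N) (f := id) 0 0
      fun _ h _ _ => h.isPrime).1 <| by
      simp_rw [id, biUnion_associatedPrimes_eq_compl_regular]
      exact fun x hx => hc x hx
  rw [AssociatedPrimes.mem_iff, isAssociatedPrime_iff] at hP
  obtain ⟨prime, x, rfl⟩ := hP
  have hx : x ∈ tors (maximalIdeal R) N := by
    refine ⟨1, fun r hr => ?_⟩
    rw [pow_one] at hr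
    simpa [Submodule.mem_colon_singleton] using hle hr
  rw [h, Submodule.mem_bot] at hx
  exact prime.ne_top (by simp [hx])

/-- Grothendieck vanishing. -/
lemma LC.subsingleton_of_supportDim_lt (n : ℕ) : ∀ (M : Type u) [AddCommGroup M] [Module R M]
    [Module.Finite R M], Module.supportDim R M < n → ∀ i, n ≤ i →
    Subsingleton (LC (maximalIdeal R) i M) := by
  induction n with
  | zero =>
    intro M _ _ _ h i _
    have : Subsingleton M := by
      by_contra hM
      rw [not_subsingleton_iff_nontrivial] at hM
      have := Module.supportDim_ne_bot_of_nontrivial R M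
      revert h this
      cases Module.supportDim R M with
      | bot => simp
      | coe a => intro h; exact absurd h (by simp)
    exact LC.subsingleton_of_subsingleton _ _ _
  | succ n ih =>
    intro M _ _ _ h i hi
    obtain ⟨i, rfl⟩ := Nat.exists_eq_add_of_le' (show 1 ≤ i by omega)
    let N := M ⧸ tors (maximalIdeal R) M
    suffices Subsingleton (LC (maximalIdeal R) (i + 1) N) from
      (LC.map_mkQ_tors_injective (maximalIdeal R) i M).subsingleton
    obtain ⟨x, hx, hreg⟩ := exists_isSMulRegular (tors_quotient_tors (maximalIdeal R) M)
    have hd := Module.supportDim_quotSMulTop_succ_eq_supportDim hreg hx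
    have hle := Module.supportDim_le_of_surjective (tors (maximalIdeal R) M).mkQ
      (tors (maximalIdeal R) M).mkQ_surjective
    have hlt : Module.supportDim R (QuotSMulTop x N) < n := by
      have : Module.supportDim R (QuotSMulTop x N) + 1 < (n : WithBot ℕ∞) + 1 := by
        rw [hd]; exact_mod_cast hle.trans_lt h
      exact lt_of_add_lt_add_right this
    have hs := ih (QuotSMulTop x N) hlt i (by omega)
    have hinj : ∀ w : LC (maximalIdeal R) (i + 1) N, x • w = 0 → w = 0 := by
      intro w hw
      rw [← LC.map_smul_id] at hw
      obtain ⟨v, rfl⟩ := (LC.exact₁ (I := maximalIdeal R) (i := i)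
        (f := (x • LinearMap.id : N →ₗ[R] N)) (fun _ _ hab => hreg hab) (exact_lsmul_mkQ x N)
        (Submodule.mkQ_surjective _) w).1 hw
      rw [Subsingleton.elim v 0, map_zero]
    refine subsingleton_of_forall_eq 0 fun w => ?_
    obtain ⟨t, ht⟩ := LC.exists_pow_smul_eq_zero w
    have := ht _ (Ideal.pow_mem_pow hx t)
    clear ht
    induction t with
    | zero => simpa using this
    | succ t iht => exact iht (hinj _ (by rwa [smul_smul, ← pow_succ']))

end Local

section Artinian

variable {R : Type u} [CommRing R]

/-- Melkersson's criterion: an `x`-power torsion module is Artinian as soon as the kernel of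
multiplication by `x` is. -/
lemma isArtinian_of_isArtinian_ker {W : Type*} [AddCommGroup W] [Module R W] {x : R}
    (htor : ∀ w : W, ∃ t : ℕ, x ^ t • w = 0)
    [hK : IsArtinian R (LinearMap.ker (x • LinearMap.id : W →ₗ[R] W))] : IsArtinian R W := by
  rw [← monotone_stabilizes_iff_artinian]
  intro f
  let F : ℕ → Submodule R W := fun j => OrderDual.ofDual (f j)
  have hanti : ∀ {j j'}, j ≤ j' → F j' ≤ F j := fun h => f.monotone h
  let V : ℕ → ℕ → Submodule R (LinearMap.ker (x • LinearMap.id : W →ₗ[R] W)) := fun k j =>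
    Submodule.comap (Submodule.subtype _) (Submodule.map (x ^ k • LinearMap.id : W →ₗ[R] W)
      (F j ⊓ LinearMap.ker (x ^ (k + 1) • LinearMap.id : W →ₗ[R] W)))
  have hV : ∀ k j u, u ∈ V k j ↔ ∃ a ∈ F j, x ^ (k + 1) • a = 0 ∧ x ^ k • a = u.1 := by
    intro k j u
    simp [V, and_assoc]
  have hVj : ∀ k {j j'}, j ≤ j' → V k j' ≤ V k j := by
    intro k j j' h u
    rw [hV, hV]
    exact fun ⟨a, ha, h1⟩ => ⟨a, hanti h ha, h1⟩
  have hVk : ∀ {k k'} j, k ≤ k' → V k' j ≤ V k j := by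
    intro k k' j h u
    rw [hV, hV]
    obtain ⟨d, rfl⟩ := Nat.exists_eq_add_of_le h
    refine fun ⟨a, ha, h1, h2⟩ => ⟨x ^ d • a, Submodule.smul_mem _ _ ha, ?_, ?_⟩
    · rw [smul_smul, ← pow_add, ← h1]; congr 2; omega
    · rw [smul_smul, ← pow_add, ← h2]
  obtain ⟨d, hd⟩ := IsArtinian.monotone_stabilizes (R := R)
    ⟨fun j => OrderDual.toDual (V j j), fun a b h => (hVk b h).trans (hVj a h)⟩
  have hstab : ∀ k, ∃ N, ∀ j, N ≤ j → V k N = V k j := fun k =>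
    IsArtinian.monotone_stabilizes (R := R) ⟨fun j => OrderDual.toDual (V k j), fun a b h => hVj k h⟩
  choose N hN using hstab
  replace hd : ∀ m, d ≤ m → V d d = V m m := hd
  let J := max d ((Finset.range d).sup N)
  have hJ : ∀ k j, J ≤ j → V k J ≤ V k j := by
    intro k j hj
    rcases lt_or_ge k d with hk | hk
    · have h1 : N k ≤ J := (Finset.le_sup (f := N) (Finset.mem_range.2 hk)).trans (le_max_right _ _)
      rw [← hN k J h1, hN k j (h1.trans hj)]
    · have h1 : d ≤ J := le_max_left _ _
      calc V k J ≤ V d d := (hVk J hk).trans (hVj d h1)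
        _ = V (max k j) (max k j) := hd _ (hk.trans (le_max_left _ _))
        _ ≤ V k j := (hVk _ (le_max_left _ _)).trans (hVj k (le_max_right _ _))
  refine ⟨J, fun j hj => le_antisymm (α := Submodule R W) ?_ (hanti hj)⟩
  suffices ∀ t : ℕ, ∀ a ∈ F J, x ^ t • a = 0 → a ∈ F j from
    fun a ha => (htor a).elim fun t ht => this t a ha ht
  intro t
  induction t with
  | zero => intro a _ h; rw [pow_zero, one_smul] at h; rw [h]; exact zero_mem _
  | succ t ih =>
    intro a ha h
    have hu : (⟨x ^ t • a, by
        rw [LinearMap.mem_ker, LinearMap.smul_apply, LinearMap.id_apply, smul_smul, ← pow_succ', h]⟩ :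
        LinearMap.ker (x • LinearMap.id : W →ₗ[R] W)) ∈ V t j :=
      hJ t j hj ((hV _ _ _).2 ⟨a, ha, h, rfl⟩)
    obtain ⟨b, hb, -, hab⟩ := (hV _ _ _).1 hu
    rw [← sub_add_cancel a b]
    refine add_mem (ih _ (sub_mem ha (hanti hj hb)) ?_) hb
    rw [smul_sub, hab, sub_self]

variable [IsNoetherianRing R] [IsLocalRing R]

open IsLocalRing

lemma isArtinian_tors (M : Type*) [AddCommGroup M] [Module R M] [Module.Finite R M] :
    IsArtinian R (tors (maximalIdeal R) M) := by
  let T := tors (maximalIdeal R) M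
  obtain ⟨k, hk⟩ := exists_pow_le_annihilator (M := T) (tors_tors (maximalIdeal R))
  by_cases hk0 : maximalIdeal R ^ k = ⊤
  · have : Subsingleton T := subsingleton_of_forall_eq 0 fun a => by
      rw [← one_smul R a]; exact hk 1 (by rw [hk0]; trivial) a
    infer_instance
  have : Nontrivial (R ⧸ maximalIdeal R ^ k) := Ideal.Quotient.nontrivial_iff.2 hk0
  have : IsLocalRing (R ⧸ maximalIdeal R ^ k) :=
    .of_surjective' (Ideal.Quotient.mk _) Ideal.Quotient.mk_surjective
  have hA : IsArtinianRing (R ⧸ maximalIdeal R ^ k) := by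
    rw [isArtinianRing_iff_isNilpotent_maximalIdeal]
    refine ⟨k, ?_⟩
    rw [← IsLocalRing.map_maximalIdeal_of_surjective (Ideal.Quotient.mk (maximalIdeal R ^ k))
      Ideal.Quotient.mk_surjective, ← Ideal.map_pow, Ideal.map_quotient_self]
    rfl
  have htor : Module.IsTorsionBySet R T (maximalIdeal R ^ k : Ideal R) :=
    fun a r => hk r r.2 a
  let := htor.module
  have : Module.Finite (R ⧸ maximalIdeal R ^ k) T := Module.Finite.of_restrictScalars_finite R _ _
  have : IsArtinian (R ⧸ maximalIdeal R ^ k) T := inferInstance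
  exact isArtinian_of_surjective_algebraMap (S := R) (R := R ⧸ maximalIdeal R ^ k)
    Ideal.Quotient.mk_surjective

lemma LC.isArtinian (i : ℕ) : ∀ (M : Type u) [AddCommGroup M] [Module R M] [Module.Finite R M],
    IsArtinian R (LC (maximalIdeal R) i M) := by
  induction i with
  | zero =>
    intro M _ _ _
    have := isArtinian_tors (R := R) M
    exact isArtinian_of_injective ((LC.eval (maximalIdeal R) M).codRestrict _ LC.eval_mem_tors)
      fun a b hab => LC.eval_injective (congrArg Subtype.val hab)
  | succ i ih =>
    intro M _ _ _
    let N := M ⧸ tors (maximalIdeal R) M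
    obtain ⟨x, hx, hreg⟩ := exists_isSMulRegular (tors_quotient_tors (maximalIdeal R) M)
    have hinj : Function.Injective (x • LinearMap.id : N →ₗ[R] N) := fun _ _ hab => hreg hab
    have := ih (QuotSMulTop x N)
    have hker : LinearMap.ker (x • LinearMap.id :
        LC (maximalIdeal R) (i + 1) N →ₗ[R] LC (maximalIdeal R) (i + 1) N) =
        LinearMap.range (LC.δ (maximalIdeal R) i hinj (exact_lsmul_mkQ x N)
          (Submodule.mkQ_surjective _)) := by
      ext w
      rw [LinearMap.mem_ker, LinearMap.mem_range, LinearMap.smul_apply, LinearMap.id_apply,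
        ← LC.map_smul_id]
      exact LC.exact₁ hinj (exact_lsmul_mkQ x N) (Submodule.mkQ_surjective _) w
    have : IsArtinian R (LC (maximalIdeal R) (i + 1) N) := by
      refine isArtinian_of_isArtinian_ker (x := x) (hK := ?_) fun w => ?_
      · obtain ⟨t, ht⟩ := LC.exists_pow_smul_eq_zero w
        exact ⟨t, ht _ (Ideal.pow_mem_pow hx t)⟩
      · rw [hker]; infer_instance
    exact isArtinian_of_injective _ (LC.map_mkQ_tors_injective (maximalIdeal R) i M)

end Artinian

section Nonvanishing

variable {R : Type u} [CommRing R] [IsLocalRing R]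

open IsLocalRing

lemma eq_of_add_one_eq_natCast {a : WithBot ℕ∞} {k : ℕ} (h : a + 1 = (k + 1 : ℕ)) : a = k := by
  induction a with
  | bot => exact absurd h.symm WithBot.coe_ne_bot
  | coe a =>
    induction a with
    | top => exact absurd (WithBot.coe_injective h) (ENat.top_ne_natCast (k + 1))
    | coe a => norm_cast at h ⊢; simpa using h

lemma supportDim_nonpos_of_maximalIdeal_le {M : Type*} [AddCommGroup M] [Module R M]
    [Module.Finite R M] {P : Ideal R} (hP : P ∈ (Module.annihilator R M).minimalPrimes)
    (hle : maximalIdeal R ≤ P) : Module.supportDim R M ≤ 0 := by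
  have : Subsingleton (Module.support R M) := by
    suffices ∀ q : Module.support R M, q.1.asIdeal = maximalIdeal R from
      ⟨fun a b => Subtype.ext (PrimeSpectrum.ext ((this a).trans (this b).symm))⟩
    rintro ⟨q, hq⟩
    rw [Module.mem_support_iff_of_finite] at hq
    have hqm := le_maximalIdeal q.2.ne_top
    exact le_antisymm hqm (hle.trans (hP.2 ⟨q.2, hq⟩ (hqm.trans hle)))
  exact Order.krullDim_nonpos_of_subsingleton

variable [IsNoetherianRing R]

lemma mem_tors_of_supportDim_nonpos {M : Type*} [AddCommGroup M] [Module R M] [Module.Finite R M]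
    (h : Module.supportDim R M ≤ 0) (a : M) : a ∈ tors (maximalIdeal R) M := by
  let N := M ⧸ tors (maximalIdeal R) M
  obtain ⟨x, hx, hreg⟩ := exists_isSMulRegular (tors_quotient_tors (maximalIdeal R) M)
  have hd := Module.supportDim_quotSMulTop_succ_eq_supportDim hreg hx
  have hle := Module.supportDim_le_of_surjective (tors (maximalIdeal R) M).mkQ
    (tors (maximalIdeal R) M).mkQ_surjective
  have hN : Module.supportDim R (M ⧸ tors (maximalIdeal R) M) = ⊥ := by
    have h0 := hd.trans_le (hle.trans h)
    rw [← hd]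
    revert h0
    cases Module.supportDim R (QuotSMulTop x (M ⧸ tors (maximalIdeal R) M)) with
    | bot => simp
    | coe a => intro h0; norm_cast at h0; simp at h0
  rw [Module.supportDim_eq_bot_iff_subsingleton, Submodule.Quotient.subsingleton_iff] at hN
  rw [hN]
  trivial

/-- Two modules of positive dimension have a common parameter. -/
lemma exists_notMem_minimalPrimes {M N : Type*} [AddCommGroup M] [Module R M]
    [Module.Finite R M] [AddCommGroup N] [Module R N] [Module.Finite R N]
    (hM : 0 < Module.supportDim R M) (hN : 0 < Module.supportDim R N) :
    ∃ s ∈ maximalIdeal R, (∀ P ∈ (Module.annihilator R M).minimalPrimes, s ∉ P) ∧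
      ∀ P ∈ (Module.annihilator R N).minimalPrimes, s ∉ P := by
  by_contra! hc
  obtain ⟨P, hP, hle⟩ := ((maximalIdeal R).subset_union_prime_finite
    (((Module.annihilator R M).finite_minimalPrimes_of_isNoetherianRing R).union
      ((Module.annihilator R N).finite_minimalPrimes_of_isNoetherianRing R)) (f := id) 0 0
    fun _ h _ _ => h.elim (fun h => h.1.1) fun h => h.1.1).1 <| by
      intro s hs
      simp only [Set.mem_iUnion, id]
      by_cases h : ∃ P ∈ (Module.annihilator R M).minimalPrimes, s ∈ P
      · obtain ⟨P, hP, hsP⟩ := h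
        exact ⟨P, Or.inl hP, hsP⟩
      · push Not at h
        obtain ⟨P, hP, hsP⟩ := hc s hs h
        exact ⟨P, Or.inr hP, hsP⟩
  rcases hP with hP | hP
  · exact absurd (supportDim_nonpos_of_maximalIdeal_le hP hle) hM.not_ge
  · exact absurd (supportDim_nonpos_of_maximalIdeal_le hP hle) hN.not_ge

variable {M N : Type u} [AddCommGroup M] [Module R M] [AddCommGroup N] [Module R N]

/-- The top local cohomology functor is right exact. -/
lemma LC.map_surjective_of_supportDim_lt [Module.Finite R M] {k : ℕ}
    (hd : Module.supportDim R M < (k + 1 : ℕ)) {g : M →ₗ[R] N} (hg : Function.Surjective g) :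
    Function.Surjective (LC.map (maximalIdeal R) k g) := by
  have hK : Module.supportDim R (LinearMap.ker g) < (k + 1 : ℕ) :=
    (Module.supportDim_le_of_injective _ (LinearMap.ker g).injective_subtype).trans_lt hd
  have := LC.subsingleton_of_supportDim_lt _ _ hK (k + 1) le_rfl
  intro z
  exact (LC.exact₃ (I := maximalIdeal R) (i := k) (LinearMap.ker g).injective_subtype
    (LinearMap.exact_subtype_ker_map g) hg z).1 (Subsingleton.elim _ _)

open scoped Pointwise in
lemma LC.map_mkQ_smul_surjective [Module.Finite R M] {k : ℕ}
    (hd : Module.supportDim R M < (k + 2 : ℕ))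
    (h : Subsingleton (LC (maximalIdeal R) (k + 1) M)) (s : R) :
    Function.Surjective (LC.map (maximalIdeal R) k (s • (⊤ : Submodule R M)).mkQ) := by
  have hs : Subsingleton (LC (maximalIdeal R) (k + 1)
      (LinearMap.range (s • LinearMap.id : M →ₗ[R] M))) :=
    (LC.map_surjective_of_supportDim_lt hd
      (LinearMap.surjective_rangeRestrict (s • LinearMap.id : M →ₗ[R] M))).subsingleton
  intro z
  exact (LC.exact₃ (I := maximalIdeal R) (i := k) (Submodule.injective_subtype _)
    (exact_range_subtype_mkQ s M) (Submodule.mkQ_surjective _) z).1 (Subsingleton.elim _ _)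

lemma LC.exists_smul_eq [Module.Finite R M] {k : ℕ} (hd : Module.supportDim R M < (k + 1 : ℕ))
    {s : R} (h : Subsingleton (LC (maximalIdeal R) k (QuotSMulTop s M)))
    (z : LC (maximalIdeal R) k M) : ∃ w, s • w = z := by
  obtain ⟨y, rfl⟩ := (LC.exact₂ (I := maximalIdeal R) (i := k) (Submodule.injective_subtype _)
    (exact_range_subtype_mkQ s M) (Submodule.mkQ_surjective _) z).1 (Subsingleton.elim _ _)
  obtain ⟨w, rfl⟩ := LC.map_surjective_of_supportDim_lt hd
    (LinearMap.surjective_rangeRestrict (s • LinearMap.id : M →ₗ[R] M)) y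
  exact ⟨w, by rw [← LC.map_comp, ← LC.map_smul_id]; rfl⟩

/-- If the local cohomology in degree `k + 1 = dim M` vanishes, then one parameter annihilates the
local cohomology in degree `k` of all quotients of `M` by a parameter. -/
lemma LC.exists_smul_quotSMulTop_eq_zero [Module.Finite R M] {k : ℕ}
    (hd : Module.supportDim R M = (k + 1 : ℕ))
    (h : Subsingleton (LC (maximalIdeal R) (k + 1) M)) :
    ∃ s₀ ∈ maximalIdeal R, (∀ P ∈ (Module.annihilator R M).minimalPrimes, s₀ ∉ P) ∧
      ∀ s, (∀ P ∈ (Module.annihilator R M).minimalPrimes, s ∉ P) →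
        ∀ z : LC (maximalIdeal R) k (QuotSMulTop s M), s₀ • z = 0 := by
  let W := LC (maximalIdeal R) k M
  have : IsArtinian R W := LC.isArtinian k M
  let S : Set R := {s | s ∈ maximalIdeal R ∧ ∀ P ∈ (Module.annihilator R M).minimalPrimes, s ∉ P}
  have hpos : 0 < Module.supportDim R M := by rw [hd]; exact_mod_cast k.succ_pos
  obtain ⟨t, htm, ht, -⟩ := exists_notMem_minimalPrimes (R := R) (M := M) (N := M) hpos hpos
  obtain ⟨_, ⟨s₀, hs₀, rfl⟩, hmin⟩ := IsArtinian.set_has_minimal (R := R) (M := W)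
    (S.image fun s : R => LinearMap.range (s • LinearMap.id : W →ₗ[R] W)) ⟨_, t, ⟨htm, ht⟩, rfl⟩
  refine ⟨s₀, hs₀.1, hs₀.2, fun s hs z => ?_⟩
  obtain ⟨w, rfl⟩ := LC.map_mkQ_smul_surjective (k := k)
    (by rw [hd]; exact_mod_cast Nat.lt_succ_self _) h s z
  have hle : LinearMap.range ((s * s₀) • LinearMap.id : W →ₗ[R] W) ≤
      LinearMap.range (s₀ • LinearMap.id : W →ₗ[R] W) := by
    rintro _ ⟨v, rfl⟩
    exact ⟨s • v, by simp [smul_smul, mul_comm]⟩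
  have heq := eq_of_le_of_not_lt hle (hmin _ ⟨s * s₀, ⟨Ideal.mul_mem_left _ _ hs₀.1,
    fun P hP hm => (hP.1.1.mem_or_mem hm).elim (hs P hP) (hs₀.2 P hP)⟩, rfl⟩)
  obtain ⟨v, hv⟩ : s₀ • w ∈ LinearMap.range ((s * s₀) • LinearMap.id : W →ₗ[R] W) :=
    heq ▸ ⟨w, rfl⟩
  have hv' : s • (s₀ • v) = s₀ • w := by rw [smul_smul]; exact hv
  have h0 : (s • LinearMap.id : QuotSMulTop s M →ₗ[R] QuotSMulTop s M) = 0 :=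
    LinearMap.ext (smul_quotSMulTop_eq_zero s)
  rw [← map_smul, ← hv', map_smul, ← LC.map_smul_id, h0, LC.map_zero']

lemma LC.nontrivial_one [Module.Finite R M] (hd : Module.supportDim R M = (1 : ℕ)) :
    Nontrivial (LC (maximalIdeal R) 1 M) := by
  by_contra hc
  rw [not_nontrivial_iff_subsingleton] at hc
  obtain ⟨s, hsm, hs, hkill⟩ := LC.exists_smul_quotSMulTop_eq_zero (k := 0) hd hc
  have hss : ∀ P ∈ (Module.annihilator R M).minimalPrimes, s * s ∉ P :=
    fun P hP hm => (hP.1.1.mem_or_mem hm).elim (hs P hP) (hs P hP)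
  have hdim := Module.supportDim_quotSMulTop_succ_eq_of_notMem_minimalPrimes_of_mem_maximalIdeal
    hss (Ideal.mul_mem_left _ _ hsm)
  have hdim0 : Module.supportDim R (QuotSMulTop (s * s) M) = (0 : ℕ) :=
    eq_of_add_one_eq_natCast (hdim.trans hd)
  have hM : Nontrivial M := by
    rw [← Module.supportDim_ne_bot_iff_nontrivial R, hd]
    exact WithBot.coe_ne_bot
  have hbot : LinearMap.range (s • LinearMap.id : M →ₗ[R] M) = ⊥ := by
    refine Submodule.eq_bot_of_le_smul_of_le_jacobson_bot (maximalIdeal R) _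
      (IsNoetherian.noetherian _) ?_ (maximalIdeal_le_jacobson _)
    rintro _ ⟨a, rfl⟩
    obtain ⟨z, hz⟩ := LC.exists_eval_eq (mem_tors_of_supportDim_nonpos (R := R) hdim0.le
      (Submodule.mkQ _ a : QuotSMulTop (s * s) M))
    have h0 : Submodule.mkQ _ (s • a) = (0 : QuotSMulTop (s * s) M) := by
      rw [map_smul, ← hz, ← map_smul, hkill _ hss, map_zero]
    obtain ⟨b, hb⟩ := (exact_lsmul_mkQ (s * s) M _).1 h0
    have hb' : s • (s • b) = s • a := by rw [smul_smul]; exact hb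
    rw [LinearMap.smul_apply, LinearMap.id_apply, ← hb']
    exact Submodule.smul_mem_smul hsm ⟨b, rfl⟩
  have hann : s ∈ Module.annihilator R M := by
    rw [Module.mem_annihilator]
    intro a
    have : s • a ∈ LinearMap.range (s • LinearMap.id : M →ₗ[R] M) := ⟨a, rfl⟩
    simpa [hbot] using this
  have hne : Module.annihilator R M ≠ ⊤ := by
    rwa [Ne, Module.annihilator_eq_top_iff, not_subsingleton_iff_nontrivial]
  obtain ⟨P, hP⟩ := Ideal.nonempty_minimalPrimes hne
  exact hs P hP (hP.1.2 hann)

/-- Grothendieck nonvanishing. -/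
lemma LC.nontrivial_of_supportDim_eq (n : ℕ) : ∀ (M : Type u) [AddCommGroup M] [Module R M]
    [Module.Finite R M], Module.supportDim R M = n → Nontrivial (LC (maximalIdeal R) n M) := by
  induction n with
  | zero =>
    intro M _ _ _ hd
    have hM : Nontrivial M := by
      rw [← Module.supportDim_ne_bot_iff_nontrivial R, hd]
      exact WithBot.coe_ne_bot
    obtain ⟨a, ha⟩ := exists_ne (0 : M)
    obtain ⟨z, hz⟩ := LC.exists_eval_eq (mem_tors_of_supportDim_nonpos (R := R) hd.le a)
    exact ⟨z, 0, fun h0 => ha (by rw [← hz, h0, map_zero])⟩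
  | succ k ih =>
    intro M _ _ _ hd
    obtain rfl | hk := Nat.eq_zero_or_pos k
    · exact LC.nontrivial_one hd
    obtain ⟨k, rfl⟩ := Nat.exists_eq_add_of_le' hk
    by_contra hc
    rw [not_nontrivial_iff_subsingleton] at hc
    obtain ⟨s₀, hs₀m, hs₀, hkill⟩ := LC.exists_smul_quotSMulTop_eq_zero hd hc
    have hd₀ : Module.supportDim R (QuotSMulTop s₀ M) = (k + 1 : ℕ) := eq_of_add_one_eq_natCast <|
      (Module.supportDim_quotSMulTop_succ_eq_of_notMem_minimalPrimes_of_mem_maximalIdeal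
        hs₀ hs₀m).trans hd
    obtain ⟨s, hsm, hs, hs'⟩ := exists_notMem_minimalPrimes (R := R) (M := M)
      (N := QuotSMulTop s₀ M) (by rw [hd]; exact_mod_cast Nat.succ_pos _)
      (by rw [hd₀]; exact_mod_cast Nat.succ_pos _)
    have hdN : Module.supportDim R (QuotSMulTop s M) = (k + 1 : ℕ) := eq_of_add_one_eq_natCast <|
      (Module.supportDim_quotSMulTop_succ_eq_of_notMem_minimalPrimes_of_mem_maximalIdeal
        hs hsm).trans hd
    have hdQ : Module.supportDim R (QuotSMulTop s (QuotSMulTop s₀ M)) = (k : ℕ) :=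
      eq_of_add_one_eq_natCast <|
        (Module.supportDim_quotSMulTop_succ_eq_of_notMem_minimalPrimes_of_mem_maximalIdeal
          hs' hsm).trans hd₀
    have hdQ' : Module.supportDim R (QuotSMulTop s₀ (QuotSMulTop s M)) < (k + 1 : ℕ) := by
      obtain ⟨g, hg⟩ := exists_surjective_quotSMulTop (R := R) (s := s₀)
        (f := (Submodule.mkQ _ ∘ₗ Submodule.mkQ _ : M →ₗ[R] QuotSMulTop s₀ (QuotSMulTop s M)))
        ((Submodule.mkQ_surjective _).comp (Submodule.mkQ_surjective _))
        (smul_quotSMulTop_eq_zero s₀)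
      obtain ⟨g', hg'⟩ := exists_surjective_quotSMulTop hg (s := s) fun b => by
        obtain ⟨a, rfl⟩ := Submodule.mkQ_surjective _ b
        rw [← map_smul, smul_quotSMulTop_eq_zero, map_zero]
      refine ((Module.supportDim_le_of_surjective g' hg').trans_eq hdQ).trans_lt ?_
      exact_mod_cast Nat.lt_succ_self _
    have hsub := LC.subsingleton_of_supportDim_lt _ _ hdQ' (k + 1) le_rfl
    obtain ⟨z, hz⟩ := @exists_ne _ (ih (QuotSMulTop s M) hdN) 0
    obtain ⟨w, hw⟩ := LC.exists_smul_eq (k := k + 1)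
      (by rw [hdN]; exact_mod_cast Nat.lt_succ_self _) hsub z
    exact hz (by rw [← hw, hkill s hs])

end Nonvanishing

section Parameters

open IsLocalRing

/-- Lifting a system of parameters of `R ⧸ p` to `R`. -/
lemma exists_finset_maximalIdeal_le_radical {R : Type*} [CommRing R] [IsNoetherianRing R]
    [IsLocalRing R] (p : Ideal R) [hp : p.IsPrime] {e : ℕ} (he : ringKrullDim (R ⧸ p) = e) :
    ∃ S : Finset R, S.card ≤ e ∧ p ⊔ Ideal.span (S : Set R) ≤ maximalIdeal R ∧
      maximalIdeal R ≤ (p ⊔ Ideal.span (S : Set R)).radical := by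
  classical
  have : IsLocalRing (R ⧸ p) :=
    .of_surjective' (Ideal.Quotient.mk _) Ideal.Quotient.mk_surjective
  obtain ⟨S', hmin, hcard⟩ := (maximalIdeal (R ⧸ p)).exists_finset_card_eq_height_of_isNoetherianRing
  have hcard' : S'.card = e := by
    rw [← IsLocalRing.maximalIdeal_height_eq_ringKrullDim, ← hcard] at he
    exact_mod_cast he
  have hsurj := Ideal.Quotient.mk_surjective (I := p)
  let S := S'.image (Function.surjInv hsurj)
  have hmap : (Ideal.span (S : Set R)).map (Ideal.Quotient.mk p) = Ideal.span (S' : Set (R ⧸ p)) := by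
    rw [Ideal.map_span, Finset.coe_image, Set.image_image]
    simp [Function.surjInv_eq]
  have hm := IsLocalRing.map_maximalIdeal_of_surjective (Ideal.Quotient.mk p) hsurj
  have hpm : p ≤ maximalIdeal R := le_maximalIdeal hp.ne_top
  refine ⟨S, Finset.card_image_le.trans hcard'.le, sup_le hpm ?_, fun a ha => ?_⟩
  · have h1 : Ideal.span (S : Set R) ≤ ((maximalIdeal R).map (Ideal.Quotient.mk p)).comap
        (Ideal.Quotient.mk p) := by
      rw [← Ideal.map_le_iff_le_comap, hmap, hm]
      exact hmin.1.2
    rwa [Ideal.comap_map_quotientMk, sup_eq_right.2 hpm] at h1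
  · have h1 : Ideal.Quotient.mk p a ∈ (Ideal.span (S' : Set (R ⧸ p))).radical := by
      rw [Ideal.radical_eq_sInf, Ideal.mem_sInf]
      rintro Q ⟨hQ, hQp⟩
      refine hmin.2 ⟨hQp, hQ⟩ (le_maximalIdeal hQp.ne_top) ?_
      rw [← hm]
      exact Ideal.mem_map_of_mem _ ha
    obtain ⟨k, hk⟩ := h1
    refine ⟨k, ?_⟩
    rw [← map_pow, ← hmap, ← Ideal.mem_comap, Ideal.comap_map_quotientMk] at hk
    exact hk

end Parameters

end PowExt

/-- in a Noetherian local ring, if `p` is a prime ideal with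
`ht(p) < dim R - dim (R/p)`, then `cd(p) > ht(p)`. -/
theorem height_lt_cohomologicalDimension_of_height_lt_dim_sub
    (R : Type u) [CommRing R] [IsNoetherianRing R] [IsLocalRing R]
    (p : Ideal R) (hp : p.IsPrime) (h n e : ℕ)
    (hh : idealHeight p = (h : ℕ∞))
    (hn : ringKrullDim R = (n : WithBot ℕ∞))
    (he : ringKrullDim (R ⧸ p) = (e : WithBot ℕ∞))
    (hlt : h < n - e) :
    (h : ℕ∞) < cohomologicalDimension p (ModuleCat.of R R) := by
  by_contra hc
  have hvan : ∀ i, h < i → Subsingleton (PowExt.LC p i R) := by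
    intro i hi
    obtain ⟨i, rfl⟩ := Nat.exists_eq_add_of_le' (Nat.one_le_of_lt hi)
    refine PowExt.LC.subsingleton_of_localCohomology p i R ?_
    rw [← not_nontrivial_iff_subsingleton]
    intro hnt
    exact hc (lt_of_lt_of_le (by exact_mod_cast hi) (le_sSup ⟨i + 1, rfl, hnt⟩))
  obtain ⟨S, hcard, hle, hrad⟩ := PowExt.exists_finset_maximalIdeal_le_radical p he
  have hvanS := PowExt.LC.subsingleton_sup_span_finset S R hvan n (by omega)
  obtain ⟨k, hk⟩ := Ideal.exists_pow_le_of_le_radical_of_fg hrad (IsNoetherian.noetherian _)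
  obtain ⟨d, rfl⟩ := Nat.exists_eq_add_of_le' (show 1 ≤ n by omega)
  have hvanm := (PowExt.LC.subsingleton_congr (fun A => PowExt.tors_congr (k := 1) (l := k)
    (by rwa [pow_one]) hk A) d R).1 hvanS
  have hnt := PowExt.LC.nontrivial_of_supportDim_eq (d + 1) R
    ((Module.supportDim_self_eq_ringKrullDim R).trans hn)
  exact not_nontrivial_iff_subsingleton.2 hvanm hnt
end
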